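/- For any vertex y∈V and any pinning vector ε=(ε_i)_{i∈V} with ε_i≥0 and at least one ε_i>0, E_{μ^ε}[e^{t_y}] = 1. -/

import Mathlib

/-! The idea is to pass from the field `t` to the random potential of a Schrödinger matrix, whose law
is explicit enough to be integrated one vertex at a time. Let `W` be the matrix of the weights `β`
on the edges and `h_i(t) = ∑_k W_ik e^{t_k - t_i} + ε_i e^{-t_i}`. Then `H(h(t)) = diag(h(t)) - W`
(`Hm`) satisfies `H(h(t)) e^t = ε`, and `e^{t_i} H(h(t))_ij e^{t_j}` is the Laplacian `L(t)` (`Lap`)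
with killing `ε_i e^{t_i}`.

* The sum over the spanning trees of the products of the edge weights is `det L(t)`
  (`matrix_tree`). The multilinear expansion of the determinant runs over all maps `V → Option V`;
  only the acyclic ones contribute, and these correspond to the trees oriented towards the root.
* The Gibbs factor is Gaussian in `s` with covariance `L(t)⁻¹` (`prod_gibbs`), so that integrating
  out `s` leaves a factor `1 / √det L(t)` (`lintegral_gauss`).
* The map `t ↦ h(t)` is a bijection onto the potentials with `H(h)` positive definite, with
  inverse `e^t = H(h)⁻¹ ε` and absolute Jacobian `det H(h(t))` (`lintegral_hvec`). Surjectivity uses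
  that `H(h)` is an M-matrix and that the graph is connected, so that `H(h)⁻¹ ε` is strictly
  positive. The law of `h` has, up to a constant, the density `Phi`, and the factor `e^{t_y}`
  becomes `(H(h)⁻¹ ε)_y`.
* The density `Phi` is integrated by eliminating one vertex after another. In terms of the Schur
  complement `z` of the eliminated vertex it splits (`Phi_sum`) into
  `exp (-(z + b² / z) / 2) / √z`, where `b ≥ 0` depends only on the other potentials, and a density
  of the same kind on the remaining vertices. If the vertex `y` is eliminated first, the weight
  `(H(h)⁻¹ ε)_y` is `b / z`. The inversion `z ↦ b² / z` shows that inserting this weight does not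
  change the integral over `z` (`lintegral_igE_inv`). Hence the weighted and the unweighted
  integrals have the same value (`lintegral_Psi`, `lintegral_Phi`), which cancels the
  normalization.

All integrands are nonnegative, and the computation is done with the Lebesgue integral in
`[0, ∞]`; the integrability of each term of the sum over the trees comes out of its finiteness. -/

open MeasureTheory Real Filter
open scoped BigOperators

attribute [local instance] Classical.propDecidable

namespace H22

variable {V : Type*} [Fintype V] [DecidableEq V]

/-- The augmented graph `Γ_ρ`: add an extra vertex `ρ` (encoded by `none`)
joined to every vertex of the original graph. -/
def aug (G : SimpleGraph V) : SimpleGraph (Option V) :=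
  SimpleGraph.fromRel (fun a b =>
    match a, b with
    | some i, some j => G.Adj i j
    | _, _ => True)

/-- `T` is (the edge set of) a spanning tree of `G`. -/
def IsSpanningTree {α : Type*} (G : SimpleGraph α) (T : Finset (Sym2 α)) : Prop :=
  ↑T ⊆ G.edgeSet ∧ (SimpleGraph.fromEdgeSet (↑T : Set (Sym2 α))).IsTree

/-- The finset of all spanning trees of `G`. -/
noncomputable def STrees {α : Type*} [Fintype α] [DecidableEq α] (G : SimpleGraph α) :
    Finset (Finset (Sym2 α)) :=
  Finset.univ.filter (fun T => IsSpanningTree G T)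

/-- Extension of a vector `t : V → ℝ` to `Option V` by `t_ρ := 0`. -/
def extV (t : V → ℝ) : Option V → ℝ := fun a => Option.elim a 0 t

/-- Lift of a (symmetrized) function of two vertices to unordered pairs. -/
noncomputable def esym {α : Type*} (f : α → α → ℝ) : Sym2 α → ℝ :=
  Sym2.lift ⟨fun a b => (f a b + f b a) / 2, fun a b => by ring⟩

/-- Combined edge weights on the augmented graph: `β` on edges of `Γ`,
`ε_i` on the edge `i ∼ ρ`. -/
def bres (β : V → V → ℝ) (ε : V → ℝ) : Option V → Option V → ℝ := fun a b =>
  match a, b with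
  | some i, some j => β i j
  | some i, none => ε i
  | none, some j => ε j
  | none, none => 0

/-- `B_{ij}(t,s) = cosh(t_i - t_j) + ½ (s_i - s_j)² e^{t_i+t_j}` on the augmented graph. -/
noncomputable def Bfun (t s : V → ℝ) (a b : Option V) : ℝ :=
  Real.cosh (extV t a - extV t b) +
    (1 / 2) * (extV s a - extV s b) ^ 2 * Real.exp (extV t a + extV t b)

/-- Weight `β_{ij} e^{t_i+t_j}` of an edge of the augmented graph. -/
noncomputable def treeW (β : V → V → ℝ) (ε : V → ℝ) (t : V → ℝ) : Sym2 (Option V) → ℝ :=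
  esym (fun a b => bres β ε a b * Real.exp (extV t a + extV t b))

/-- Gibbs factor `e^{-β_{ij}(B_{ij}(t,s)-1)}` of an edge of the augmented graph. -/
noncomputable def gibbs (β : V → V → ℝ) (ε : V → ℝ) (t s : V → ℝ) : Sym2 (Option V) → ℝ :=
  esym (fun a b => Real.exp (-(bres β ε a b * (Bfun t s a b - 1))))

/-- The density of the measure `μ^ε` with respect to
(Lebesgue on `ℝ^V × ℝ^V`) × (counting measure on spanning trees). -/
noncomputable def dens (G : SimpleGraph V) (β : V → V → ℝ) (ε : V → ℝ)
    (t s : V → ℝ) (T : Finset (Sym2 (Option V))) : ℝ :=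
  (∏ j, Real.exp (-t j) / (2 * Real.pi)) *
  (∏ e ∈ Finset.univ.filter (fun e : Sym2 (Option V) => e ∈ (aug G).edgeSet),
      gibbs β ε t s e) *
  (∏ e ∈ T, treeW β ε t e)

/-- Expectation of an observable `f(t,s,T)` under the measure `μ^ε`. -/
noncomputable def expect (G : SimpleGraph V) (β : V → V → ℝ) (ε : V → ℝ)
    (f : (V → ℝ) → (V → ℝ) → Finset (Sym2 (Option V)) → ℝ) : ℝ :=
  ∑ T ∈ STrees (aug G), ∫ p : (V → ℝ) × (V → ℝ), dens G β ε p.1 p.2 T * f p.1 p.2 T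

/-- The weighted graph Laplacian `A(t)` of `Γ`. -/
noncomputable def Amat (G : SimpleGraph V) (β : V → V → ℝ) (t : V → ℝ) : Matrix V V ℝ :=
  Matrix.of fun i j =>
    if i = j then ∑ k ∈ Finset.univ.filter (fun k => G.Adj k j), β k j * Real.exp (t k + t j)
    else if G.Adj i j then -(β i j * Real.exp (t i + t j)) else 0

/-- The pinning diagonal matrix `ε̂(t) = diag(ε_i e^{t_i})`. -/
noncomputable def epsHat (ε : V → ℝ) (t : V → ℝ) : Matrix V V ℝ :=
  Matrix.diagonal fun i => ε i * Real.exp (t i)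

/-- The Green's function `G^ε_{xy} = e^{t_x+t_y} (A(t)+ε̂(t))⁻¹_{xy}`. -/
noncomputable def Gfun (G : SimpleGraph V) (β : V → V → ℝ) (ε : V → ℝ)
    (t : V → ℝ) (x y : V) : ℝ :=
  Real.exp (t x + t y) * (Amat G β t + epsHat ε t)⁻¹ x y

/-- The edge `i ∼ ρ` of the augmented graph. -/
def rootEdge (i : V) : Sym2 (Option V) := s(some i, none)

/-- The set of roots `R(T) = {i ∈ V : (i ∼ ρ) ∈ T}`. -/
noncomputable def roots (T : Finset (Sym2 (Option V))) : Finset V :=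
  Finset.univ.filter fun i => rootEdge i ∈ T

/-- The forest `F(T) = T ∩ E`: edges of `T` not incident to `ρ`. -/
noncomputable def forestOf (T : Finset (Sym2 (Option V))) : Finset (Sym2 (Option V)) :=
  T.filter fun e => ¬ ((none : Option V) ∈ e)

/-- `x ↔_T y`: `x` and `y` are connected in `T` through a path not using `ρ`. -/
def connIn (T : Finset (Sym2 (Option V))) (x y : V) : Prop :=
  (SimpleGraph.fromEdgeSet (↑(forestOf T) : Set (Sym2 (Option V)))).Reachable (some x) (some y)

/-- The observable `O^π_{xy}`. -/
noncomputable def obs (pv : V → ℝ) (x y : V) (t : V → ℝ)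
    (T : Finset (Sym2 (Option V))) : ℝ :=
  Real.exp (t x + t y) / (pv x * Real.exp (t x) + pv y * Real.exp (t y)) *
    (if rootEdge x ∈ T ∧ connIn T x y then 1 else 0)

/-- The pinning `ε = (π_i ε)_{i ∈ V}`. -/
def pinOf (pv : V → ℝ) (ε : ℝ) : V → ℝ := fun i => pv i * ε

/-- The pinning `c δ_x` concentrated at the single vertex `x`. -/
def singlePin (x : V) (c : ℝ) : V → ℝ := fun i => if i = x then c else 0

end H22

set_option linter.unusedSectionVars false

namespace H22

/-! ### Two one-dimensional integrals -/

lemma lintegral_gauss_half :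
    ∫⁻ u : ℝ, ENNReal.ofReal (exp (-(1/2) * u^2)) = ENNReal.ofReal (√(2*π)) := by
  rw [← ofReal_integral_eq_lintegral_ofReal (integrable_exp_neg_mul_sq (by norm_num))
    (ae_of_all _ fun _ => (exp_pos _).le), integral_gaussian]
  congr 2
  field_simp

/-- The exponential factor common to the two one-dimensional integrals, which come from the
inverse Gaussian distribution and its reciprocal. -/
noncomputable def igE (b y : ℝ) : ℝ := exp (-(1/2) * y - (1/2) * b^2 / y) / √y

lemma igE_nonneg (b y : ℝ) : 0 ≤ igE b y := by unfold igE; positivity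

lemma measurable_igE (b : ℝ) : Measurable (igE b) := by unfold igE; fun_prop

/-- Inversion `y ↦ b² / y` exchanges the two inverse Gaussian integrands. -/
lemma lintegral_igE_inv (b : ℝ) (hb : 0 < b) :
    ∫⁻ y in Set.Ioi 0, ENNReal.ofReal (igE b y) =
      ∫⁻ y in Set.Ioi 0, ENNReal.ofReal (b / y * igE b y) := by
  have himg : (fun y : ℝ => b^2 / y) '' Set.Ioi 0 = Set.Ioi 0 := by
    ext z
    constructor
    · rintro ⟨y, hy, rfl⟩
      have : (0:ℝ) < y := hy
      exact Set.mem_Ioi.2 (by positivity)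
    · intro hz
      have : (0:ℝ) < z := hz
      refine ⟨b^2 / z, Set.mem_Ioi.2 (by positivity), ?_⟩
      simp only
      field_simp
  have hd : ∀ y ∈ Set.Ioi (0:ℝ), HasDerivWithinAt (fun y : ℝ => b^2 / y) (-(b^2) / y^2)
      (Set.Ioi 0) y := by
    intro y hy
    have hy' : (y:ℝ) ≠ 0 := (Set.mem_Ioi.1 hy).ne'
    have := ((hasDerivAt_const y (b^2)).div (hasDerivAt_id y) hy').hasDerivWithinAt
      (s := Set.Ioi 0)
    convert! this using 1
    simp
  have hinj : Set.InjOn (fun y : ℝ => b^2 / y) (Set.Ioi 0) := by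
    intro x hx y hy hxy
    have hx' : (0:ℝ) < x := hx
    have hy' : (0:ℝ) < y := hy
    simp only at hxy
    field_simp at hxy
    exact hxy.symm
  have key := lintegral_image_eq_lintegral_abs_deriv_mul measurableSet_Ioi hd hinj
    (fun y => ENNReal.ofReal (igE b y))
  rw [himg] at key
  rw [key]
  refine setLIntegral_congr_fun measurableSet_Ioi fun y hy => ?_
  have hy' : (0:ℝ) < y := hy
  rw [← ENNReal.ofReal_mul (abs_nonneg _)]
  congr 1
  have h1 : |(-(b^2) / y^2)| = b^2 / y^2 := by
    rw [neg_div, abs_neg, abs_of_nonneg (by positivity)]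
  have h2 : √(b^2 / y) = b / √y := by
    rw [sqrt_div (by positivity), sqrt_sq hb.le]
  have h3 : -(1/2) * (b^2 / y) - (1/2) * b^2 / (b^2 / y) = -(1/2) * y - (1/2) * b^2 / y := by
    field_simp
    ring
  have hs : √y * √y = y := mul_self_sqrt hy'.le
  have hs0 : 0 < √y := sqrt_pos.2 hy'
  unfold igE
  rw [h1, h2, h3]
  generalize exp (-(1/2) * y - (1/2) * b^2 / y) = X
  field_simp
  linear_combination X * hs

/-- The two integrands add up to the pull-back of a Gaussian under `y ↦ √y - b/√y`. -/
lemma lintegral_igE_add (b : ℝ) (hb : 0 < b) :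
    ∫⁻ y in Set.Ioi 0, (ENNReal.ofReal (igE b y) + ENNReal.ofReal (b / y * igE b y)) =
      ENNReal.ofReal (2 * (√(2*π) * exp (-b))) := by
  set f : ℝ → ℝ := fun y => √y - b / √y with hf
  have himg : f '' Set.Ioi 0 = Set.univ := by
    refine Set.eq_univ_of_forall fun u => ?_
    -- the positive root `x` of `x² - u x - b = 0`, squared
    set x := (u + √(u^2 + 4*b)) / 2 with hx
    have hS : √(u^2 + 4*b) * √(u^2 + 4*b) = u^2 + 4*b := mul_self_sqrt (by positivity)
    have hlt : |u| < √(u^2 + 4*b) := by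
      rw [← sqrt_sq_eq_abs]
      exact sqrt_lt_sqrt (sq_nonneg _) (by linarith)
    have hxpos : 0 < x := by
      have := neg_abs_le u
      rw [hx]; linarith
    refine ⟨x^2, Set.mem_Ioi.2 (by positivity), ?_⟩
    simp only [hf]
    rw [sqrt_sq hxpos.le]
    field_simp
    rw [hx]
    nlinarith
  have hd : ∀ y ∈ Set.Ioi (0:ℝ), HasDerivWithinAt f
      (1 / (2 * √y) + b * (1 / (2 * √y)) / (√y)^2) (Set.Ioi 0) y := by
    intro y hy
    have hy' : (y:ℝ) ≠ 0 := (Set.mem_Ioi.1 hy).ne'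
    have hs0 : √y ≠ 0 := (sqrt_pos.2 (Set.mem_Ioi.1 hy)).ne'
    have h1 := Real.hasDerivAt_sqrt hy'
    have := (h1.sub ((hasDerivAt_const y b).div h1 hs0)).hasDerivWithinAt (s := Set.Ioi 0)
    convert! this using 1
    ring
  have hmono : StrictMonoOn f (Set.Ioi 0) := by
    intro x hx y hy hxy
    have hx' : 0 < √x := sqrt_pos.2 hx
    have hs : √x < √y := sqrt_lt_sqrt (Set.mem_Ioi.1 hx).le hxy
    have : b / √y < b / √x := div_lt_div_of_pos_left hb hx' hs
    simp only [hf]; linarith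
  have key := lintegral_image_eq_lintegral_abs_deriv_mul measurableSet_Ioi hd hmono.injOn
    (fun u => ENNReal.ofReal (exp (-(1/2) * u^2)))
  rw [himg, setLIntegral_univ, lintegral_gauss_half] at key
  have h2 : ENNReal.ofReal (2 * (√(2*π) * exp (-b))) =
      ENNReal.ofReal (2 * exp (-b)) * ENNReal.ofReal (√(2*π)) := by
    rw [← ENNReal.ofReal_mul (by positivity)]; congr 1; ring
  rw [h2, key, ← lintegral_const_mul' _ _ ENNReal.ofReal_ne_top]
  refine setLIntegral_congr_fun measurableSet_Ioi fun y hy => ?_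
  have hy' : (0:ℝ) < y := hy
  have hs : √y * √y = y := mul_self_sqrt hy'.le
  have hs0 : 0 < √y := sqrt_pos.2 hy'
  rw [← ENNReal.ofReal_add (igE_nonneg _ _) (mul_nonneg (by positivity) (igE_nonneg _ _)),
    ← ENNReal.ofReal_mul (abs_nonneg _), ← ENNReal.ofReal_mul (by positivity),
    abs_of_nonneg (by positivity)]
  congr 1
  have hE : exp (-(1/2) * (f y)^2) = exp b * exp (-(1/2) * y - (1/2) * b^2 / y) := by
    rw [← exp_add]
    congr 1
    simp only [hf]
    have : y = √y ^ 2 := by rw [sq, hs]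
    have e2 : b + (-(1/2) * y - (1/2) * b^2 / y) =
      b + (-(1/2) * √y^2 - (1/2) * b^2 / √y^2) := by rw [← this]
    rw [e2]
    field_simp
    ring
  have hb1 : exp (-b) * exp b = 1 := by rw [← exp_add]; simp
  rw [hE]
  unfold igE
  generalize exp (-(1/2) * y - (1/2) * b^2 / y) = X
  have : (1 / (2 * √y) + b * (1 / (2 * √y)) / √y ^ 2) = (1 + b / y) / (2 * √y) := by
    rw [sq, hs]; field_simp
  rw [this]
  calc X / √y + b / y * (X / √y) = (exp (-b) * exp b) * ((1 + b/y) * X / √y) := by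
        rw [hb1]; ring
    _ = _ := by field_simp

lemma lintegral_igE_aux (b : ℝ) (hb : 0 < b) :
    ∫⁻ y in Set.Ioi 0, ENNReal.ofReal (igE b y) = ENNReal.ofReal (√(2*π) * exp (-b)) := by
  have h := lintegral_igE_add b hb
  rw [lintegral_add_left (measurable_igE b).ennreal_ofReal, ← lintegral_igE_inv b hb, ← two_mul,
    ENNReal.ofReal_mul (by norm_num), ENNReal.ofReal_ofNat] at h
  exact (ENNReal.mul_right_inj (by norm_num) (by norm_num)).1 h

/-- Normalization of the inverse Gaussian distribution. -/
lemma lintegral_igE' (b : ℝ) (hb : 0 < b) :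
    ∫⁻ y in Set.Ioi 0, ENNReal.ofReal (b / y * igE b y) = ENNReal.ofReal (√(2*π) * exp (-b)) := by
  rw [← lintegral_igE_inv b hb, lintegral_igE_aux b hb]

lemma lintegral_igE_zero :
    ∫⁻ y in Set.Ioi 0, ENNReal.ofReal (igE 0 y) = ENNReal.ofReal (√(2*π)) := by
  have h := Real.integral_rpow_mul_exp_neg_mul_Ioi (a := 1/2) (r := 1/2) (by norm_num)
    (by norm_num)
  have hi : IntegrableOn (fun y : ℝ => y ^ ((1/2 : ℝ) - 1) * exp (-(1/2 * y))) (Set.Ioi 0) := by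
    by_contra hcon
    rw [integral_undef hcon] at h
    have : 0 < (1 / (1/2 : ℝ)) ^ (1/2 : ℝ) * Gamma (1/2) := by
      have := Gamma_pos_of_pos (show (0:ℝ) < 1/2 by norm_num)
      positivity
    linarith
  have e : √(2*π) = (1 / (1/2 : ℝ)) ^ (1/2 : ℝ) * Gamma (1/2) := by
    rw [Gamma_one_half_eq, ← sqrt_eq_rpow, ← sqrt_mul (by norm_num)]
    norm_num
  rw [e, ← h, ofReal_integral_eq_lintegral_ofReal hi]
  · refine setLIntegral_congr_fun measurableSet_Ioi fun y hy => ?_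
    have hy' : (0:ℝ) < y := hy
    simp only [igE]
    congr 1
    rw [show (1/2 : ℝ) - 1 = -(1/2) by norm_num, rpow_neg hy'.le, ← sqrt_eq_rpow,
      div_eq_inv_mul]
    congr 2
    ring
  · refine (ae_restrict_iff' measurableSet_Ioi).2 (ae_of_all _ fun y hy => ?_)
    have hy' : (0:ℝ) < y := hy
    simp only [Pi.zero_apply]
    positivity

lemma lintegral_igE (b : ℝ) (hb : 0 ≤ b) :
    ∫⁻ y in Set.Ioi 0, ENNReal.ofReal (igE b y) = ENNReal.ofReal (√(2*π) * exp (-b)) := by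
  rcases hb.eq_or_lt with rfl | h
  · simpa using lintegral_igE_zero
  · exact lintegral_igE_aux b h

/-! ### Schur complements of the random Schrödinger matrix -/

section Schrodinger

open scoped Matrix

variable {α : Type*} [Fintype α] [DecidableEq α]

/-- The matrix `H(h) = diag(h) - W`. -/
def Hm (W : Matrix α α ℝ) (h : α → ℝ) : Matrix α α ℝ := Matrix.diagonal h - W

lemma Hm_apply (W : Matrix α α ℝ) (h : α → ℝ) (i j : α) :
    Hm W h i j = (if i = j then h i else 0) - W i j := by
  simp [Hm, Matrix.diagonal_apply]

lemma Hm_isHermitian {W : Matrix α α ℝ} (hW : W.IsSymm) (h : α → ℝ) : (Hm W h).IsHermitian := by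
  unfold Hm
  refine Matrix.IsHermitian.sub (Matrix.isHermitian_diagonal h) ?_
  rwa [Matrix.IsHermitian, Matrix.conjTranspose_eq_transpose_of_trivial]

lemma isUnit_det_of_posDef {M : Matrix α α ℝ} (hM : M.PosDef) : IsUnit M.det :=
  hM.det_pos.ne'.isUnit

/-- A positive definite matrix with nonpositive off-diagonal entries is an M-matrix:
its inverse preserves the nonnegative cone. -/
lemma nonneg_of_mulVec {W : Matrix α α ℝ} (hW0 : ∀ i j, 0 ≤ W i j) {h : α → ℝ}
    (hH : (Hm W h).PosDef) {ψ η : α → ℝ} (hη : ∀ i, 0 ≤ η i) (hψ : Hm W h *ᵥ ψ = η) (i : α) :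
    0 ≤ ψ i := by
  -- the negative part `m` of `ψ` satisfies `⟨m, H m⟩ ≤ 0`
  set m : α → ℝ := fun i => max (-ψ i) 0 with hm
  have hm0 : ∀ i, 0 ≤ m i := fun i => le_max_right _ _
  have hp0 : ∀ i, 0 ≤ ψ i + m i := fun i => by
    have := le_max_left (-ψ i) 0
    simp only [hm]; linarith
  have hmp : ∀ i, m i * (ψ i + m i) = 0 := fun i => by
    simp only [hm]
    rcases le_total (-ψ i) 0 with h | h
    · simp [max_eq_right h]
    · simp [max_eq_left h]
  have h1 : 0 ≤ m ⬝ᵥ (Hm W h *ᵥ ψ) := by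
    rw [hψ]
    exact Finset.sum_nonneg fun i _ => mul_nonneg (hm0 i) (hη i)
  have h2 : m ⬝ᵥ (Hm W h *ᵥ (ψ + m)) ≤ 0 := by
    simp only [dotProduct, Matrix.mulVec, Finset.mul_sum]
    refine Finset.sum_nonpos fun i _ => Finset.sum_nonpos fun j _ => ?_
    rw [Hm_apply, Pi.add_apply]
    by_cases hij : i = j
    · subst hij
      have : m i * ((h i - W i i) * (ψ i + m i)) = 0 := by
        rw [mul_left_comm, hmp, mul_zero]
      simp [this]
    · have := mul_nonneg (hm0 i) (mul_nonneg (hW0 i j) (hp0 j))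
      simp only [hij, if_false]
      linarith
  have h3 : m ⬝ᵥ (Hm W h *ᵥ m) ≤ 0 := by
    rw [Matrix.mulVec_add, dotProduct_add] at h2
    linarith
  have h4 : m = 0 := by
    by_contra hne
    have := hH.dotProduct_mulVec_pos hne
    simp only [star_trivial] at this
    linarith
  have h5 := hp0 i
  rw [h4] at h5
  simpa using h5

lemma inv_mulVec_nonneg {W : Matrix α α ℝ} (hW0 : ∀ i j, 0 ≤ W i j) {h : α → ℝ}
    (hH : (Hm W h).PosDef) {η : α → ℝ} (hη : ∀ i, 0 ≤ η i) (i : α) :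
    0 ≤ ((Hm W h)⁻¹ *ᵥ η) i := by
  refine nonneg_of_mulVec hW0 hH hη ?_ i
  rw [Matrix.mulVec_mulVec, Matrix.mul_nonsing_inv _ (isUnit_det_of_posDef hH),
    Matrix.one_mulVec]

/-- The couplings of the distinguished vertex to the others. -/
def wrow (W : Matrix (Unit ⊕ α) (Unit ⊕ α) ℝ) : α → ℝ := fun j => W (Sum.inl ()) (Sum.inr j)

/-- The shift `W₁₁ + ⟨w, H'⁻¹ w⟩` in the Schur complement of the distinguished vertex. -/
noncomputable def schurC (W : Matrix (Unit ⊕ α) (Unit ⊕ α) ℝ) (h' : α → ℝ) : ℝ :=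
  W (Sum.inl ()) (Sum.inl ()) + wrow W ⬝ᵥ ((Hm W.toBlocks₂₂ h')⁻¹ *ᵥ wrow W)

/-- The effective source `η₁ + ⟨w, H'⁻¹ η'⟩` at the distinguished vertex. -/
noncomputable def schurB (W : Matrix (Unit ⊕ α) (Unit ⊕ α) ℝ) (η : Unit ⊕ α → ℝ) (h' : α → ℝ) :
    ℝ :=
  η (Sum.inl ()) + wrow W ⬝ᵥ ((Hm W.toBlocks₂₂ h')⁻¹ *ᵥ (fun i => η (Sum.inr i)))

lemma Hm_sum {W : Matrix (Unit ⊕ α) (Unit ⊕ α) ℝ} (hW : W.IsSymm) (a : ℝ) (h' : α → ℝ) :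
    Hm W (Sum.elim (fun _ => a) h') =
      Matrix.fromBlocks (Matrix.of fun _ _ => a - W (Sum.inl ()) (Sum.inl ()))
        (Matrix.of fun _ j => - wrow W j) (Matrix.of fun _ j => - wrow W j)ᴴ
        (Hm W.toBlocks₂₂ h') := by
  ext i j
  rcases i with i | i <;> rcases j with j | j
  · simp [Hm_apply]
  · simp [Hm_apply, wrow]
  · have := hW.apply (Sum.inl ()) (Sum.inr i)
    simp [Hm_apply, wrow, this]
  · simp [Hm_apply, Matrix.toBlocks₂₂]

lemma schur_mul_apply {W : Matrix (Unit ⊕ α) (Unit ⊕ α) ℝ} (a : ℝ) (h' : α → ℝ) (i j : Unit) :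
    ((Matrix.of fun _ _ => a - W (Sum.inl ()) (Sum.inl ()) : Matrix Unit Unit ℝ) -
      (Matrix.of fun _ j => - wrow W j : Matrix Unit α ℝ) * (Hm W.toBlocks₂₂ h')⁻¹ *
      (Matrix.of fun _ j => - wrow W j : Matrix Unit α ℝ)ᴴ) i j = a - schurC W h' := by
  rw [Matrix.mul_assoc, Matrix.sub_apply, Matrix.mul_apply]
  simp only [Matrix.of_apply, schurC, dotProduct, Matrix.mulVec, Matrix.mul_apply,
    Matrix.conjTranspose_apply, star_trivial]
  rw [sub_sub]
  congr 2
  refine Finset.sum_congr rfl fun k _ => ?_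
  rw [neg_mul, ← mul_neg, ← Finset.sum_neg_distrib]
  simp

lemma det_Hm_sum {W : Matrix (Unit ⊕ α) (Unit ⊕ α) ℝ} (hW : W.IsSymm) (a : ℝ) (h' : α → ℝ)
    (hH : (Hm W.toBlocks₂₂ h').PosDef) :
    (Hm W (Sum.elim (fun _ => a) h')).det = (a - schurC W h') * (Hm W.toBlocks₂₂ h').det := by
  have := Matrix.invertibleOfIsUnitDet _ (isUnit_det_of_posDef hH)
  rw [Hm_sum hW, Matrix.det_fromBlocks₂₂, Matrix.invOf_eq_nonsing_inv, Matrix.det_unique (n := Unit),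
    schur_mul_apply, mul_comm]

lemma posDef_Hm_sum {W : Matrix (Unit ⊕ α) (Unit ⊕ α) ℝ} (hW : W.IsSymm) (a : ℝ) (h' : α → ℝ) :
    (Hm W (Sum.elim (fun _ => a) h')).PosDef ↔
      (Hm W.toBlocks₂₂ h').PosDef ∧ schurC W h' < a := by
  constructor
  · intro hp
    have h1 : (Hm W.toBlocks₂₂ h').PosDef := by
      have := hp.submatrix (e := (Sum.inr : α → Unit ⊕ α)) Sum.inr_injective
      rw [Hm_sum hW] at this
      exact this
    refine ⟨h1, ?_⟩
    have := hp.det_pos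
    rw [det_Hm_sum hW a h' h1] at this
    have := pos_of_mul_pos_left this h1.det_pos.le
    linarith
  · rintro ⟨h1, h2⟩
    have := Matrix.invertibleOfIsUnitDet _ (isUnit_det_of_posDef h1)
    have hs : (Hm W (Sum.elim (fun _ => a) h')).PosSemidef := by
      rw [Hm_sum hW, Matrix.PosDef.fromBlocks₂₂ _ _ h1]
      refine Matrix.PosSemidef.of_dotProduct_mulVec_nonneg ?_ fun x => ?_
      · ext i j
        rw [Matrix.conjTranspose_apply, schur_mul_apply, star_trivial]
      · simp only [dotProduct, Matrix.mulVec, schur_mul_apply, Finset.univ_unique,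
          Finset.sum_singleton, star_trivial]
        have : 0 ≤ (a - schurC W h') * (x default * x default) :=
          mul_nonneg (by linarith) (mul_self_nonneg _)
        linarith
    rw [hs.posDef_iff_det_ne_zero, det_Hm_sum hW a h' h1]
    exact mul_ne_zero (by linarith) h1.det_pos.ne'

/-- The solution of `H ψ = η` by block elimination. -/
lemma Hm_sum_inv_mulVec {W : Matrix (Unit ⊕ α) (Unit ⊕ α) ℝ} (hW : W.IsSymm) (a : ℝ) (h' : α → ℝ)
    (h1 : (Hm W.toBlocks₂₂ h').PosDef) (h2 : schurC W h' < a) (η : Unit ⊕ α → ℝ) :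
    (Hm W (Sum.elim (fun _ => a) h'))⁻¹ *ᵥ η =
      Sum.elim (fun _ => schurB W η h' / (a - schurC W h'))
        ((Hm W.toBlocks₂₂ h')⁻¹ *ᵥ (fun i => η (Sum.inr i)) +
          (schurB W η h' / (a - schurC W h')) • ((Hm W.toBlocks₂₂ h')⁻¹ *ᵥ wrow W)) := by
  have hp := (posDef_Hm_sum hW a h').2 ⟨h1, h2⟩
  have hy : a - schurC W h' ≠ 0 := by linarith
  set x := schurB W η h' / (a - schurC W h') with hx
  have hxy : x * (a - schurC W h') = schurB W η h' := div_mul_cancel₀ _ hy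
  set H' := Hm W.toBlocks₂₂ h' with hH'
  have hinv : ∀ v, H' *ᵥ (H'⁻¹ *ᵥ v) = v := fun v => by
    rw [Matrix.mulVec_mulVec, Matrix.mul_nonsing_inv _ (isUnit_det_of_posDef h1),
      Matrix.one_mulVec]
  have key : Hm W (Sum.elim (fun _ => a) h') *ᵥ (Sum.elim (fun _ => x)
        (H'⁻¹ *ᵥ (fun i => η (Sum.inr i)) + x • (H'⁻¹ *ᵥ wrow W))) = η := by
    rw [Hm_sum hW, Matrix.fromBlocks_mulVec, ← hH']
    ext i
    rcases i with i | i
    · have e : ((Matrix.of fun _ j => - wrow W j : Matrix Unit α ℝ) *ᵥ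
          (H'⁻¹ *ᵥ (fun i => η (Sum.inr i)) + x • (H'⁻¹ *ᵥ wrow W))) i =
          - (wrow W ⬝ᵥ (H'⁻¹ *ᵥ (fun i => η (Sum.inr i)))
            + x * (wrow W ⬝ᵥ (H'⁻¹ *ᵥ wrow W))) := by
        rw [← smul_eq_mul, ← dotProduct_smul, ← dotProduct_add, ← neg_dotProduct]
        rfl
      simp only [Sum.elim_inl, Pi.add_apply, Sum.elim_comp_inl, Sum.elim_comp_inr, e]
      simp only [Matrix.mulVec, dotProduct, Finset.univ_unique, Finset.sum_singleton,
        Matrix.of_apply] at *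
      simp only [schurC, schurB, ← hH', dotProduct, Matrix.mulVec] at hxy
      linarith
    · simp only [Sum.elim_inr, Sum.elim_comp_inl, Sum.elim_comp_inr, Matrix.mulVec_add,
        Matrix.mulVec_smul, hinv]
      simp [Matrix.mulVec, dotProduct]
      ring
  conv_lhs => rw [← key]
  rw [Matrix.mulVec_mulVec, Matrix.nonsing_inv_mul _ (isUnit_det_of_posDef hp),
    Matrix.one_mulVec]

/-- Density of the random Schrödinger potential `h`, without normalization. -/
noncomputable def Phi (W : Matrix α α ℝ) (η h : α → ℝ) : ℝ :=
  if (Hm W h).PosDef then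
    exp (-(1/2) * (∑ i, ∑ j, Hm W h i j) - (1/2) * (η ⬝ᵥ ((Hm W h)⁻¹ *ᵥ η))) / √(Hm W h).det
  else 0

lemma Phi_nonneg (W : Matrix α α ℝ) (η h : α → ℝ) : 0 ≤ Phi W η h := by
  unfold Phi
  split_ifs
  · positivity
  · rfl

/-- In terms of the Schur complement `y = a - schurC W h'`, the density splits off an inverse
Gaussian factor, and the couplings of the eliminated vertex are added to the source. -/
lemma Phi_sum {W : Matrix (Unit ⊕ α) (Unit ⊕ α) ℝ} (hW : W.IsSymm) (a : ℝ) (h' : α → ℝ)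
    (h1 : (Hm W.toBlocks₂₂ h').PosDef) (h2 : schurC W h' < a) (η : Unit ⊕ α → ℝ) :
    Phi W η (Sum.elim (fun _ => a) h') =
      igE (schurB W η h') (a - schurC W h') *
        (exp (schurB W η h') * exp (∑ j, wrow W j - η (Sum.inl ())) *
          Phi W.toBlocks₂₂ ((fun i => η (Sum.inr i)) + wrow W) h') := by
  have hp := (posDef_Hm_sum hW a h').2 ⟨h1, h2⟩
  have hy : 0 < a - schurC W h' := by linarith
  unfold Phi
  rw [if_pos hp, if_pos h1, det_Hm_sum hW a h' h1, Hm_sum_inv_mulVec hW a h' h1 h2,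
    sqrt_mul hy.le, igE]
  have hsum : ∑ i, ∑ j, Hm W (Sum.elim (fun _ => a) h') i j =
      (a - W (Sum.inl ()) (Sum.inl ())) - 2 * ∑ j, wrow W j +
        ∑ i, ∑ j, Hm W.toBlocks₂₂ h' i j := by
    rw [Hm_sum hW]
    simp only [Fintype.sum_sum_type, Matrix.fromBlocks_apply₁₁, Matrix.fromBlocks_apply₁₂,
      Matrix.fromBlocks_apply₂₁, Matrix.fromBlocks_apply₂₂, Finset.univ_unique,
      Finset.sum_singleton, Matrix.of_apply, Finset.sum_neg_distrib, Matrix.conjTranspose_apply,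
      star_trivial, Finset.sum_add_distrib]
    ring
  rw [hsum]
  set H' := Hm W.toBlocks₂₂ h' with hH'
  set η' : α → ℝ := fun i => η (Sum.inr i) with hη'
  have hT : (H'⁻¹)ᵀ = H'⁻¹ := by
    have := h1.inv.isHermitian
    rwa [Matrix.IsHermitian, Matrix.conjTranspose_eq_transpose_of_trivial] at this
  have hsymm : ∀ u v : α → ℝ, u ⬝ᵥ (H'⁻¹ *ᵥ v) = v ⬝ᵥ (H'⁻¹ *ᵥ u) := fun u v => by
    rw [Matrix.dotProduct_mulVec, ← Matrix.mulVec_transpose, hT, dotProduct_comm]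
  have hdot : ∀ (x : ℝ) (v : α → ℝ), η ⬝ᵥ Sum.elim (fun _ => x) v =
      η (Sum.inl ()) * x + η' ⬝ᵥ v := fun x v => by
    simp [dotProduct, Fintype.sum_sum_type, hη']
  rw [hdot, dotProduct_add, dotProduct_smul, Matrix.mulVec_add, dotProduct_add,
    add_dotProduct, add_dotProduct, hsymm (wrow W) η']
  have hC : schurC W h' = W (Sum.inl ()) (Sum.inl ()) + wrow W ⬝ᵥ (H'⁻¹ *ᵥ wrow W) := rfl
  have hB : schurB W η h' = η (Sum.inl ()) + η' ⬝ᵥ (H'⁻¹ *ᵥ wrow W) := by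
    rw [hsymm]; rfl
  generalize η' ⬝ᵥ (H'⁻¹ *ᵥ wrow W) = p at *
  generalize wrow W ⬝ᵥ (H'⁻¹ *ᵥ wrow W) = q at *
  generalize η' ⬝ᵥ (H'⁻¹ *ᵥ η') = r at *
  generalize ∑ i, ∑ j, H' i j = u at *
  have hx : η (Sum.inl ()) * (schurB W η h' / (a - schurC W h')) +
      (schurB W η h' / (a - schurC W h')) * p =
      schurB W η h' ^ 2 / (a - schurC W h') := by
    rw [show p = schurB W η h' - η (Sum.inl ()) by linarith]
    ring
  rw [smul_eq_mul]
  have hexp : ∀ A B C D s t : ℝ, exp A / s * (exp B * exp C * (exp D / t)) =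
      exp (A + B + C + D) / (s * t) := by
    intros
    rw [exp_add, exp_add, exp_add]
    ring
  rw [hexp]
  congr 2
  have hx' : schurB W η h' / (a - schurC W h') * p = schurB W η h' ^ 2 / (a - schurC W h') -
    η (Sum.inl ()) * (schurB W η h' / (a - schurC W h')) := by linarith
  rw [hx']
  rw [show (1/2) * schurB W η h' ^ 2 / (a - schurC W h') =
    (1/2) * (schurB W η h' ^ 2 / (a - schurC W h')) by ring]
  linarith

end Schrodinger

/-! ### Integrals over the random Schrödinger potential -/

section SchrodingerIntegral

open scoped Matrix

variable {α : Type*} [Fintype α] [DecidableEq α]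

lemma continuous_Hm (W : Matrix α α ℝ) : Continuous (fun h : α → ℝ => Hm W h) := by
  unfold Hm
  fun_prop

lemma measurableSet_posDef {W : Matrix α α ℝ} (hW : W.IsSymm) :
    MeasurableSet {h : α → ℝ | (Hm W h).PosDef} := by
  have h1 : {h : α → ℝ | (Hm W h).PosDef} =
      (⋂ x : α → ℝ, {h | 0 ≤ x ⬝ᵥ (Hm W h *ᵥ x)}) ∩ {h | (Hm W h).det ≠ 0} := by
    ext h
    simp only [Set.mem_ofPred_eq, Set.mem_inter_iff, Set.mem_iInter]
    constructor
    · intro hp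
      exact ⟨fun x => by simpa using hp.posSemidef.dotProduct_mulVec_nonneg x, hp.det_pos.ne'⟩
    · rintro ⟨h2, h3⟩
      have : (Hm W h).PosSemidef :=
        Matrix.PosSemidef.of_dotProduct_mulVec_nonneg (Hm_isHermitian hW h)
          (fun x => by simpa using h2 x)
      exact this.posDef_iff_det_ne_zero.2 h3
  rw [h1]
  refine MeasurableSet.inter (IsClosed.measurableSet (isClosed_iInter fun x => ?_))
    (IsOpen.measurableSet ?_)
  · have := continuous_Hm W
    exact isClosed_le continuous_const (by fun_prop)
  · exact isOpen_ne_fun (continuous_Hm W).matrix_det continuous_const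

lemma measurable_inv_mulVec (W : Matrix α α ℝ) (η : α → ℝ) (i : α) :
    Measurable (fun h : α → ℝ => ((Hm W h)⁻¹ *ᵥ η) i) := by
  have h1 : (fun h : α → ℝ => ((Hm W h)⁻¹ *ᵥ η) i) =
      fun h => ((Hm W h).det)⁻¹ * ((Hm W h).adjugate *ᵥ η) i := by
    funext h
    rw [Matrix.inv_def, Ring.inverse_eq_inv', Matrix.smul_mulVec, Pi.smul_apply, smul_eq_mul]
  rw [h1]
  have h2 : Continuous (fun h : α → ℝ => (Hm W h).det) := (continuous_Hm W).matrix_det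
  have h3 : Continuous (fun h : α → ℝ => ((Hm W h).adjugate *ᵥ η) i) := by
    have := (continuous_Hm W).matrix_adjugate
    exact (continuous_apply i).comp (this.matrix_mulVec continuous_const)
  exact h2.measurable.inv.mul h3.measurable

lemma measurable_Phi {W : Matrix α α ℝ} (hW : W.IsSymm) (η : α → ℝ) : Measurable (Phi W η) := by
  unfold Phi
  refine Measurable.ite (measurableSet_posDef hW) ?_ measurable_const
  have h2 : Measurable (fun h : α → ℝ => (Hm W h).det) := (continuous_Hm W).matrix_det.measurable
  have h3 : Measurable (fun h : α → ℝ => ∑ i, ∑ j, Hm W h i j) := by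
    refine Continuous.measurable ?_
    have := continuous_Hm W
    fun_prop
  have h4 : Measurable (fun h : α → ℝ => η ⬝ᵥ ((Hm W h)⁻¹ *ᵥ η)) := by
    unfold dotProduct
    exact Finset.measurable_sum _ fun i _ => (measurable_inv_mulVec W η i).const_mul _
  exact (((h3.const_mul _).sub (h4.const_mul _)).exp).div h2.sqrt

/-- The density weighted by the component `i` of `H⁻¹ η`. -/
noncomputable def Psi (W : Matrix α α ℝ) (η : α → ℝ) (i : α) (h : α → ℝ) : ℝ :=
  Phi W η h * ((Hm W h)⁻¹ *ᵥ η) i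

lemma measurable_Psi {W : Matrix α α ℝ} (hW : W.IsSymm) (η : α → ℝ) (i : α) :
    Measurable (Psi W η i) := (measurable_Phi hW η).mul (measurable_inv_mulVec W η i)

lemma lintegral_sum_pi {F : (Unit ⊕ α → ℝ) → ENNReal} (hF : Measurable F) :
    ∫⁻ h, F h = ∫⁻ h' : α → ℝ, ∫⁻ a : ℝ, F (Sum.elim (fun _ => a) h') := by
  have h1 := volume_measurePreserving_sumPiEquivProdPi_symm (fun _ : Unit ⊕ α => ℝ)
  rw [← h1.lintegral_comp_emb (MeasurableEquiv.measurableEmbedding _), Measure.volume_eq_prod,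
    lintegral_prod_symm'
      (fun z => F ((MeasurableEquiv.sumPiEquivProdPi fun _ : Unit ⊕ α => ℝ).symm z))
      (hF.comp (MeasurableEquiv.measurable _))]
  refine lintegral_congr fun h' => ?_
  have h2 := (volume_preserving_funUnique Unit ℝ).symm
  rw [← h2.lintegral_comp_emb (MeasurableEquiv.measurableEmbedding _)]
  refine lintegral_congr fun a => ?_
  congr 1

lemma lintegral_schur (c : ℝ) (F G : ℝ → ENNReal) (h0 : ∀ a, a ≤ c → F a = 0)
    (h1 : ∀ a, c < a → F a = G (a - c)) :
    ∫⁻ a, F a = ∫⁻ y in Set.Ioi 0, G y := by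
  rw [← lintegral_indicator measurableSet_Ioi,
    ← lintegral_sub_right_eq_self ((Set.Ioi (0:ℝ)).indicator G) c]
  refine lintegral_congr fun a => ?_
  by_cases h : c < a
  · rw [h1 a h, Set.indicator_of_mem (by simpa using h)]
  · rw [h0 a (not_lt.1 h), Set.indicator_of_notMem (by simpa using h)]

lemma Phi_of_not {W : Matrix α α ℝ} {η h : α → ℝ} (hn : ¬ (Hm W h).PosDef) : Phi W η h = 0 :=
  if_neg hn

lemma schurB_nonneg {W : Matrix (Unit ⊕ α) (Unit ⊕ α) ℝ} (hW0 : ∀ i j, 0 ≤ W i j)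
    {η : Unit ⊕ α → ℝ} (hη : ∀ i, 0 ≤ η i) {h' : α → ℝ}
    (h1 : (Hm W.toBlocks₂₂ h').PosDef) : 0 ≤ schurB W η h' :=
  add_nonneg (hη _) (Finset.sum_nonneg fun i _ => mul_nonneg (hW0 _ _)
    (inv_mulVec_nonneg (W := W.toBlocks₂₂) (fun _ _ => hW0 _ _) h1 (fun _ => hη _) i))

lemma ofReal_inner (b r s : ℝ) (hr : 0 ≤ r) :
    ENNReal.ofReal (√(2*π) * exp (-b)) * ENNReal.ofReal (exp b * r * s) =
      ENNReal.ofReal (√(2*π) * r) * ENNReal.ofReal s := by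
  rw [← ENNReal.ofReal_mul (by positivity), ← ENNReal.ofReal_mul (by positivity)]
  congr 1
  have : exp (-b) * exp b = 1 := by rw [← exp_add]; simp
  linear_combination √(2*π) * r * s * this

/-- Integrating out the potential at the distinguished vertex. -/
lemma lintegral_Phi_inner {W : Matrix (Unit ⊕ α) (Unit ⊕ α) ℝ} (hW : W.IsSymm)
    (hW0 : ∀ i j, 0 ≤ W i j) {η : Unit ⊕ α → ℝ} (hη : ∀ i, 0 ≤ η i) (h' : α → ℝ) :
    ∫⁻ a : ℝ, ENNReal.ofReal (Phi W η (Sum.elim (fun _ => a) h')) =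
      ENNReal.ofReal (√(2*π) * exp (∑ j, wrow W j - η (Sum.inl ()))) *
        ENNReal.ofReal (Phi W.toBlocks₂₂ ((fun i => η (Sum.inr i)) + wrow W) h') := by
  by_cases h1 : (Hm W.toBlocks₂₂ h').PosDef
  · rw [lintegral_schur (schurC W h') _ (fun y => ENNReal.ofReal (igE (schurB W η h') y) *
      ENNReal.ofReal (exp (schurB W η h') * exp (∑ j, wrow W j - η (Sum.inl ())) *
          Phi W.toBlocks₂₂ ((fun i => η (Sum.inr i)) + wrow W) h')),
      lintegral_mul_const' _ _ ENNReal.ofReal_ne_top,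
      lintegral_igE _ (schurB_nonneg hW0 hη h1), ofReal_inner _ _ _ (exp_pos _).le]
    · intro a ha
      rw [Phi_of_not, ENNReal.ofReal_zero]
      rw [posDef_Hm_sum hW]
      exact fun h => absurd h.2 (not_lt.2 ha)
    · intro a ha
      rw [Phi_sum hW a h' h1 ha, ENNReal.ofReal_mul (igE_nonneg _ _)]
  · rw [Phi_of_not h1, ENNReal.ofReal_zero, mul_zero, lintegral_eq_zero_of_ae_eq_zero]
    refine ae_of_all _ fun a => ?_
    simp only [Pi.zero_apply]
    rw [Phi_of_not, ENNReal.ofReal_zero]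
    rw [posDef_Hm_sum hW]
    exact fun h => h1 h.1

/-- Weighting by the solution at the distinguished vertex does not change the result. -/
lemma lintegral_Psi_inner {W : Matrix (Unit ⊕ α) (Unit ⊕ α) ℝ} (hW : W.IsSymm)
    {η : Unit ⊕ α → ℝ}
    (hpos : ∀ h, (Hm W h).PosDef → 0 < ((Hm W h)⁻¹ *ᵥ η) (Sum.inl ())) (h' : α → ℝ) :
    ∫⁻ a : ℝ, ENNReal.ofReal (Psi W η (Sum.inl ()) (Sum.elim (fun _ => a) h')) =
      ENNReal.ofReal (√(2*π) * exp (∑ j, wrow W j - η (Sum.inl ()))) *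
        ENNReal.ofReal (Phi W.toBlocks₂₂ ((fun i => η (Sum.inr i)) + wrow W) h') := by
  by_cases h1 : (Hm W.toBlocks₂₂ h').PosDef
  · have hb : 0 < schurB W η h' := by
      have h2 : schurC W h' < schurC W h' + 1 := by linarith
      have := hpos _ ((posDef_Hm_sum hW (schurC W h' + 1) h').2 ⟨h1, h2⟩)
      rw [Hm_sum_inv_mulVec hW _ h' h1 h2] at this
      simpa using this
    rw [lintegral_schur (schurC W h') _
      (fun y => ENNReal.ofReal (schurB W η h' / y * igE (schurB W η h') y) *
      ENNReal.ofReal (exp (schurB W η h') * exp (∑ j, wrow W j - η (Sum.inl ())) *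
          Phi W.toBlocks₂₂ ((fun i => η (Sum.inr i)) + wrow W) h')),
      lintegral_mul_const' _ _ ENNReal.ofReal_ne_top,
      lintegral_igE' _ hb, ofReal_inner _ _ _ (exp_pos _).le]
    · intro a ha
      rw [Psi, Phi_of_not, zero_mul, ENNReal.ofReal_zero]
      rw [posDef_Hm_sum hW]
      exact fun h => absurd h.2 (not_lt.2 ha)
    · intro a ha
      rw [Psi, Phi_sum hW a h' h1 ha, Hm_sum_inv_mulVec hW _ h' h1 ha, Sum.elim_inl,
        ← ENNReal.ofReal_mul (mul_nonneg (div_nonneg hb.le (by linarith)) (igE_nonneg _ _))]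
      congr 1
      ring
  · rw [Phi_of_not h1, ENNReal.ofReal_zero, mul_zero, lintegral_eq_zero_of_ae_eq_zero]
    refine ae_of_all _ fun a => ?_
    simp only [Pi.zero_apply]
    rw [Psi, Phi_of_not, zero_mul, ENNReal.ofReal_zero]
    rw [posDef_Hm_sum hW]
    exact fun h => h1 h.1

/-! Relabelling of the vertices. -/

variable {β : Type*} [Fintype β] [DecidableEq β]

lemma Hm_reindex (W : Matrix α α ℝ) (e : β ≃ α) (k : β → ℝ) :
    Hm (W.submatrix e e) k = (Hm W (k ∘ e.symm)).submatrix e e := by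
  ext i j
  simp [Hm_apply]

lemma posDef_reindex (W : Matrix α α ℝ) (e : β ≃ α) (k : β → ℝ) :
    (Hm (W.submatrix e e) k).PosDef ↔ (Hm W (k ∘ e.symm)).PosDef := by
  rw [Hm_reindex]
  refine ⟨fun h => ?_, fun h => h.submatrix e.injective⟩
  have := h.submatrix e.symm.injective
  simpa using this

lemma inv_mulVec_reindex (W : Matrix α α ℝ) (η : α → ℝ) (e : β ≃ α) (k : β → ℝ) :
    (Hm (W.submatrix e e) k)⁻¹ *ᵥ (η ∘ e) = ((Hm W (k ∘ e.symm))⁻¹ *ᵥ η) ∘ e := by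
  rw [Hm_reindex, Matrix.inv_submatrix_equiv, Matrix.submatrix_mulVec_equiv]
  congr 2
  ext i
  simp

lemma Phi_reindex (W : Matrix α α ℝ) (η : α → ℝ) (e : β ≃ α) (k : β → ℝ) :
    Phi (W.submatrix e e) (η ∘ e) k = Phi W η (k ∘ e.symm) := by
  unfold Phi
  simp only [posDef_reindex]
  rw [inv_mulVec_reindex, comp_equiv_dotProduct_comp_equiv, Hm_reindex, Matrix.det_submatrix_equiv_self]
  congr 6
  simp only [Matrix.submatrix_apply]
  rw [← e.sum_comp]
  exact Finset.sum_congr rfl fun i _ => (e.sum_comp (fun j => Hm W (k ∘ e.symm) (e i) j))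

lemma lintegral_reindex (F : (α → ℝ) → ENNReal) (e : β ≃ α) :
    ∫⁻ h, F h = ∫⁻ k : β → ℝ, F (k ∘ e.symm) := by
  have h1 := volume_measurePreserving_piCongrLeft (fun _ : α => ℝ) e
  rw [← h1.lintegral_comp_emb (MeasurableEquiv.measurableEmbedding _)]
  refine lintegral_congr fun k => ?_
  congr 1
  ext i
  obtain ⟨j, rfl⟩ := e.surjective i
  simp [MeasurableEquiv.coe_piCongrLeft, Equiv.piCongrLeft_apply_apply]

/-- Singling out one vertex. -/
noncomputable def splitAt (a : α) : Unit ⊕ {x // x ≠ a} ≃ α :=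
  (Equiv.sumComm Unit _).trans
    ((Equiv.optionEquivSumPUnit _).symm.trans (Equiv.optionSubtypeNe a))

lemma splitAt_inl (a : α) : splitAt a (Sum.inl ()) = a := by
  simp [splitAt]

omit [DecidableEq α] in
lemma sum_blocks (W : Matrix (Unit ⊕ α) (Unit ⊕ α) ℝ) (η : Unit ⊕ α → ℝ) :
    (∑ j, wrow W j - η (Sum.inl ())) + -∑ i, ((fun i => η (Sum.inr i)) + wrow W) i =
      -∑ i, η i := by
  simp only [Pi.add_apply, Finset.sum_add_distrib, Fintype.sum_sum_type, Finset.univ_unique,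
    Finset.sum_singleton]
  have : (default : Unit) = () := rfl
  rw [this]
  ring

lemma isSymm_toBlocks₂₂ {W : Matrix (Unit ⊕ α) (Unit ⊕ α) ℝ} (hW : W.IsSymm) :
    W.toBlocks₂₂.IsSymm := by
  ext i j
  exact hW.apply (Sum.inr i) (Sum.inr j)

end SchrodingerIntegral

universe u

/-- Normalization of the multivariate density `Phi`, by successive elimination of the vertices. -/
lemma lintegral_Phi (n : ℕ) : ∀ {α : Type u} [Fintype α] [DecidableEq α], Fintype.card α = n →
    ∀ {W : Matrix α α ℝ}, W.IsSymm → (∀ i j, 0 ≤ W i j) → ∀ {η : α → ℝ}, (∀ i, 0 ≤ η i) →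
    ∫⁻ h, ENNReal.ofReal (Phi W η h) = ENNReal.ofReal (√(2*π) ^ n * exp (-∑ i, η i)) := by
  induction n with
  | zero =>
    intro α _ _ hc W hW hW0 η hη
    have := Fintype.card_eq_zero_iff.1 hc
    have hp : ∀ h : α → ℝ, Phi W η h = 1 := fun h => by
      have : (Hm W h).PosDef := by
        refine Matrix.PosDef.of_dotProduct_mulVec_pos (Hm_isHermitian hW h) fun x hx => ?_
        exact absurd (Subsingleton.elim x 0) hx
      rw [Phi, if_pos this]
      simp
    simp [hp, volume_pi]
  | succ n ih =>
    intro α _ _ hc W hW hW0 η hη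
    have hne : Nonempty α := Fintype.card_pos_iff.1 (by omega)
    obtain ⟨a⟩ := hne
    set e := splitAt a
    have hW' : (W.submatrix e e).IsSymm := by
      ext i j
      exact hW.apply (e i) (e j)
    have hc' : Fintype.card {x // x ≠ a} = n := by
      have := Fintype.card_congr e
      rw [Fintype.card_sum, hc, Fintype.card_unit] at this
      omega
    rw [lintegral_reindex _ e]
    simp only [← Phi_reindex]
    rw [lintegral_sum_pi (measurable_Phi hW' _).ennreal_ofReal]
    simp only [lintegral_Phi_inner hW' (fun _ _ => hW0 _ _) (η := η ∘ e) (fun _ => hη _)]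
    rw [lintegral_const_mul' _ _ ENNReal.ofReal_ne_top, ih hc' (isSymm_toBlocks₂₂ hW')
      (fun _ _ => hW0 _ _)
        (η := (fun i => (η ∘ e) (Sum.inr i)) + wrow (W.submatrix e e))
        (fun _ => add_nonneg (hη _) (hW0 _ _)),
      ← ENNReal.ofReal_mul (by positivity)]
    congr 1
    rw [mul_mul_mul_comm, ← exp_add, sum_blocks, pow_succ', ← e.sum_comp η]
    rfl

/-- Under the normalized density, the mean of the solution of `H ψ = η` is one at each vertex where
it is always positive: that vertex is eliminated first, which reduces the integral to
`lintegral_Phi` on the remaining vertices. -/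
lemma lintegral_Psi {α : Type u} [Fintype α] [DecidableEq α]
    {W : Matrix α α ℝ} (hW : W.IsSymm) (hW0 : ∀ i j, 0 ≤ W i j) {η : α → ℝ} (hη : ∀ i, 0 ≤ η i)
    (a : α) (hpos : ∀ h, (Hm W h).PosDef → 0 < ((Hm W h)⁻¹.mulVec η) a) :
    ∫⁻ h, ENNReal.ofReal (Psi W η a h) =
      ENNReal.ofReal (√(2*π) ^ (Fintype.card α) * exp (-∑ i, η i)) := by
  set e := splitAt a with he
  have hea : e (Sum.inl ()) = a := splitAt_inl a
  have hW' : (W.submatrix e e).IsSymm := by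
    ext i j
    exact hW.apply (e i) (e j)
  have hc' : Fintype.card α = Fintype.card {x // x ≠ a} + 1 := by
    have := Fintype.card_congr e
    rw [Fintype.card_sum, Fintype.card_unit] at this
    omega
  have hPsi : ∀ k : Unit ⊕ {x // x ≠ a} → ℝ, Psi W η a (k ∘ e.symm) =
      Psi (W.submatrix e e) (η ∘ e) (Sum.inl ()) k := fun k => by
    rw [Psi, Psi, Phi_reindex, inv_mulVec_reindex, Function.comp_apply, hea]
  rw [lintegral_reindex _ e]
  simp only [hPsi]
  rw [lintegral_sum_pi (measurable_Psi hW' _ _).ennreal_ofReal]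
  have hpos' : ∀ h, (Hm (W.submatrix e e) h).PosDef →
      0 < ((Hm (W.submatrix e e) h)⁻¹.mulVec (η ∘ e)) (Sum.inl ()) := fun h hp => by
    rw [inv_mulVec_reindex, Function.comp_apply, hea]
    exact hpos _ ((posDef_reindex W e h).1 hp)
  simp only [lintegral_Psi_inner hW' hpos']
  rw [lintegral_const_mul' _ _ ENNReal.ofReal_ne_top, lintegral_Phi _ rfl (isSymm_toBlocks₂₂ hW')
    (fun _ _ => hW0 _ _)
    (η := (fun i => (η ∘ e) (Sum.inr i)) + wrow (W.submatrix e e))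
    (fun _ => add_nonneg (hη _) (hW0 _ _)),
    ← ENNReal.ofReal_mul (by positivity)]
  congr 1
  rw [mul_mul_mul_comm, ← exp_add, sum_blocks, hc', pow_succ', ← e.sum_comp η]
  rfl

/-! ### The weighted matrix–tree theorem -/

section MatrixTree

open scoped Matrix

variable {V : Type*} [Fintype V] [DecidableEq V]

/-- A map `f : V → Option V`, seen as a choice of one outgoing edge at each vertex of `V`, is
acyclic when the outgoing edges decrease some height function; following them leads to `none`. -/
def Acyc (f : V → Option V) : Prop :=
  ∃ h : Option V → ℕ, ∀ i, h (f i) < h (some i)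

/-- The matrix whose row `i` is `e_i - e_{f i}`, with `e_none = 0`. -/
noncomputable def stepMat (f : V → Option V) : Matrix V V ℝ :=
  Matrix.of fun i j => (if i = j then 1 else 0) - (if f i = some j then 1 else 0)

lemma det_stepMat_of_acyc {f : V → Option V} (hf : Acyc f) : (stepMat f).det = 1 := by
  obtain ⟨h, hh⟩ := hf
  have hb : (stepMat f).BlockTriangular (fun i => OrderDual.toDual (h (some i))) := by
    intro i j hij
    have hij' : h (some i) < h (some j) := hij
    have h1 : i ≠ j := fun e => by simp [e] at hij'
    have h2 : f i ≠ some j := fun e => by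
      have := hh i
      rw [e] at this
      omega
    simp [stepMat, h1, h2]
  rw [hb.det]
  refine Finset.prod_eq_one fun a _ => ?_
  have : (stepMat f).toSquareBlock (fun i => OrderDual.toDual (h (some i))) a = 1 := by
    ext ⟨i, hi⟩ ⟨j, hj⟩
    have h2 : f i ≠ some j := fun e => by
      have h3 := hh i
      have h4 : h (some i) = h (some j) := hi.trans hj.symm
      rw [e] at h3
      omega
    simp [stepMat, Matrix.toSquareBlock_def, h2, Matrix.one_apply]
  rw [this, Matrix.det_one]

lemma det_stepMat_of_not_acyc {f : V → Option V} (hf : ¬ Acyc f) : (stepMat f).det = 0 := by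
  -- the indicator of the set of vertices whose orbit never reaches `none` is in the kernel
  set F : Option V → Option V := fun o => o.bind f with hF
  have hsucc : ∀ k i, F^[k + 1] (some i) = F^[k] (f i) := fun k i => by
    rw [Function.iterate_succ_apply]; rfl
  have hnone : ∀ k, F^[k] none = none := fun k => by
    induction k with
    | zero => rfl
    | succ k ih => rw [Function.iterate_succ_apply]; exact ih
  rw [← Matrix.exists_mulVec_eq_zero_iff]
  set S : V → Prop := fun i => ∀ k, F^[k] (some i) ≠ none with hS
  have hstep : ∀ i, S i ↔ ∃ j, f i = some j ∧ S j := by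
    intro i
    constructor
    · intro hi
      cases hfi : f i with
      | none =>
        refine absurd ?_ (hi 1)
        rw [hsucc, hfi, hnone]
      | some j =>
        refine ⟨j, rfl, fun k => ?_⟩
        rw [← hfi, ← hsucc]
        exact hi _
    · rintro ⟨j, hj, hSj⟩ k
      cases k with
      | zero => simp
      | succ k => rw [hsucc, hj]; exact hSj k
  refine ⟨fun i => if S i then 1 else 0, ?_, ?_⟩
  · intro h0
    apply hf
    have hall : ∀ o, ∃ k, F^[k] o = none := by
      intro o
      cases o with
      | none => exact ⟨0, rfl⟩
      | some i =>
        by_contra hcon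
        have hSi : S i := fun k hk => hcon ⟨k, hk⟩
        have := congrFun h0 i
        simp [hSi] at this
    refine ⟨fun o => Nat.find (hall o), fun i => ?_⟩
    change Nat.find (hall (f i)) < Nat.find (hall (some i))
    have h1 := Nat.find_spec (hall (some i))
    cases hk : Nat.find (hall (some i)) with
    | zero => rw [hk] at h1; simp at h1
    | succ m =>
      rw [hk, hsucc] at h1
      exact Nat.lt_succ_of_le (Nat.find_min' (hall (f i)) h1)
  · ext i
    have h1 : (stepMat f *ᵥ fun i => if S i then (1:ℝ) else 0) i =
        (if S i then 1 else 0) - ∑ j, if f i = some j then (if S j then (1:ℝ) else 0) else 0 := by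
      simp only [Matrix.mulVec, dotProduct, stepMat, Matrix.of_apply, sub_mul,
        Finset.sum_sub_distrib, ite_mul, one_mul, zero_mul, Finset.sum_ite_eq, Finset.mem_univ,
        if_true]
    rw [h1, Pi.zero_apply, sub_eq_zero]
    cases hfi : f i with
    | none =>
      have : ¬ S i := fun h => by
        obtain ⟨j, hj, -⟩ := (hstep i).1 h
        simp [hfi] at hj
      simp [this]
    | some k =>
      have : S i ↔ S k := by
        rw [hstep, hfi]
        simp
      simp [this]

/-- Multilinear expansion of the determinant of a Laplacian with killing. -/
lemma det_expand (a : V → Option V → ℝ) :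
    (Matrix.of fun i j => ∑ o : Option V, a i o *
      ((if i = j then 1 else 0) - (if o = some j then 1 else 0)) : Matrix V V ℝ).det =
      ∑ f : V → Option V with Acyc f, ∏ i, a i (f i) := by
  have h1 : (Matrix.of fun i j => ∑ o : Option V, a i o *
      ((if i = j then 1 else 0) - (if o = some j then 1 else 0)) : Matrix V V ℝ) =
      fun i => ∑ o : Option V, a i o • (fun j : V => ((if i = j then 1 else 0) -
        (if o = some j then 1 else 0) : ℝ)) := by
    ext i j
    simp [Finset.sum_apply]
  rw [h1]
  have h2 := (Matrix.detRowAlternating (n := V) (R := ℝ)).toMultilinearMap.map_sum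
    (fun i (o : Option V) => a i o • (fun j : V => ((if i = j then 1 else 0) -
        (if o = some j then 1 else 0) : ℝ)))
  refine h2.trans ?_
  rw [Finset.sum_filter]
  refine Finset.sum_congr rfl fun f _ => ?_
  rw [MultilinearMap.map_smul_univ, smul_eq_mul]
  have h3 : (Matrix.detRowAlternating (n := V) (R := ℝ)).toMultilinearMap
    (fun i => (fun j : V => ((if i = j then 1 else 0) -
        (if f i = some j then 1 else 0) : ℝ))) = (stepMat f).det := rfl
  rw [h3]
  split_ifs with hf
  · rw [det_stepMat_of_acyc hf, mul_one]
  · rw [det_stepMat_of_not_acyc hf, mul_zero]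

/-- The edges `{i, f i}`. -/
noncomputable def edgesOf (f : V → Option V) : Finset (Sym2 (Option V)) :=
  Finset.univ.image fun i => s(some i, f i)

lemma mem_edgesOf {f : V → Option V} {e : Sym2 (Option V)} :
    e ∈ edgesOf f ↔ ∃ i, s(some i, f i) = e := by
  simp [edgesOf]

lemma edge_injective {f : V → Option V} (hf : Acyc f) :
    Function.Injective fun i => s(some i, f i) := by
  obtain ⟨h, hh⟩ := hf
  intro i j hij
  simp only [Sym2.eq_iff, Option.some.injEq] at hij
  rcases hij with ⟨h1, -⟩ | ⟨h1, h2⟩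
  · exact h1
  · have h3 := hh i
    have h4 := hh j
    rw [h2] at h3
    rw [← h1] at h4
    omega

lemma prod_edgesOf {f : V → Option V} (hf : Acyc f) (w : Sym2 (Option V) → ℝ) :
    ∏ e ∈ edgesOf f, w e = ∏ i, w s(some i, f i) := by
  unfold edgesOf
  rw [Finset.prod_image fun i _ j _ h => edge_injective hf h]

lemma card_edgesOf {f : V → Option V} (hf : Acyc f) : (edgesOf f).card = Fintype.card V := by
  unfold edgesOf
  rw [Finset.card_image_of_injective _ (edge_injective hf), Finset.card_univ]

lemma edgesOf_injOn : Set.InjOn edgesOf {f : V → Option V | Acyc f} := by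
  intro f hf g hg hfg
  obtain ⟨h, hh⟩ := id hg
  have key : ∀ n i, h (some i) = n → f i = g i := by
    intro n
    induction n using Nat.strong_induction_on with
    | _ n ih =>
      intro i hi
      have h1 : s(some i, g i) ∈ edgesOf f := by
        rw [hfg]
        exact mem_edgesOf.2 ⟨i, rfl⟩
      obtain ⟨j, hj⟩ := mem_edgesOf.1 h1
      simp only [Sym2.eq_iff, Option.some.injEq] at hj
      rcases hj with ⟨h2, h3⟩ | ⟨h2, h3⟩
      · rw [← h3, h2]
      · have h4 := hh i
        have h5 := hh j
        have h6 := ih (h (some j)) (by rw [h2]; omega) j rfl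
        rw [← h6, h3] at h5
        rw [← h2] at h4
        omega
  funext i
  exact key _ i rfl

lemma edgeSet_of_subset {α : Type*} {G : SimpleGraph α} {T : Set (Sym2 α)}
    (hT : T ⊆ G.edgeSet) : (SimpleGraph.fromEdgeSet T).edgeSet = T := by
  rw [SimpleGraph.edgeSet_fromEdgeSet]
  ext e
  simp only [Set.mem_sdiff]
  exact ⟨fun h => h.1, fun h => ⟨h, G.not_isDiag_of_mem_edgeSet (hT h)⟩⟩

lemma isSpanningTree_edgesOf {G : SimpleGraph (Option V)} {f : V → Option V} (hf : Acyc f)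
    (hG : ∀ i, G.Adj (some i) (f i)) : IsSpanningTree G (edgesOf f) := by
  have hsub : (↑(edgesOf f) : Set (Sym2 (Option V))) ⊆ G.edgeSet := by
    intro e he
    obtain ⟨i, rfl⟩ := mem_edgesOf.1 he
    exact hG i
  refine ⟨hsub, SimpleGraph.isTree_iff_connected_and_card.2 ⟨?_, ?_⟩⟩
  · obtain ⟨h, hh⟩ := id hf
    have key : ∀ n o, h o = n →
        (SimpleGraph.fromEdgeSet (↑(edgesOf f) : Set (Sym2 (Option V)))).Reachable o none := by
      intro n
      induction n using Nat.strong_induction_on with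
      | _ n ih =>
        intro o ho
        cases o with
        | none => exact SimpleGraph.Reachable.refl _
        | some i =>
          have hadj : (SimpleGraph.fromEdgeSet (↑(edgesOf f) : Set (Sym2 (Option V)))).Adj
              (some i) (f i) := by
            rw [SimpleGraph.fromEdgeSet_adj]
            exact ⟨mem_edgesOf.2 ⟨i, rfl⟩, (hG i).ne⟩
          exact hadj.reachable.trans (ih (h (f i)) (ho ▸ hh i) _ rfl)
    have : Nonempty (Option V) := ⟨none⟩
    exact ⟨fun u v => (key _ u rfl).trans (key _ v rfl).symm⟩
  · rw [edgeSet_of_subset hsub, Nat.card_eq_fintype_card (α := Option V), Fintype.card_option,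
      ← card_edgesOf hf]
    simp

lemma exists_edgesOf {G : SimpleGraph (Option V)} {T : Finset (Sym2 (Option V))}
    (hT : IsSpanningTree G T) :
    ∃ f : V → Option V, Acyc f ∧ (∀ i, G.Adj (some i) (f i)) ∧ edgesOf f = T := by
  obtain ⟨hsub, htree⟩ := hT
  obtain ⟨hc, hcard⟩ := SimpleGraph.isTree_iff_connected_and_card.1 htree
  set H := SimpleGraph.fromEdgeSet (↑T : Set (Sym2 (Option V))) with hH
  have hstep : ∀ i : V, ∃ o, H.Adj (some i) o ∧ H.dist o none < H.dist (some i) none := by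
    intro i
    obtain ⟨p, hp⟩ := hc.exists_walk_length_eq_dist (some i) none
    cases p with
    | cons hadj q =>
      refine ⟨_, hadj, ?_⟩
      have := H.dist_le q
      rw [SimpleGraph.Walk.length_cons] at hp
      omega
  choose f hf1 hf2 using hstep
  have hac : Acyc f := ⟨fun o => H.dist o none, hf2⟩
  have hmem : ∀ i, s(some i, f i) ∈ T := fun i => by
    have := hf1 i
    rw [hH, SimpleGraph.fromEdgeSet_adj] at this
    exact this.1
  refine ⟨f, hac, fun i => hsub (hmem i), ?_⟩
  refine Finset.eq_of_subset_of_card_le ?_ ?_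
  · intro e he
    obtain ⟨i, rfl⟩ := mem_edgesOf.1 he
    exact hmem i
  · rw [card_edgesOf hac]
    rw [edgeSet_of_subset hsub, Nat.card_eq_fintype_card, Nat.card_eq_fintype_card,
      Fintype.card_option] at hcard
    simp at hcard
    omega

lemma STrees_eq (G : SimpleGraph (Option V)) :
    STrees G = (Finset.univ.filter fun f : V → Option V =>
      Acyc f ∧ ∀ i, G.Adj (some i) (f i)).image edgesOf := by
  ext T
  simp only [STrees, Finset.mem_filter, Finset.mem_univ, true_and, Finset.mem_image]
  constructor
  · intro h
    obtain ⟨f, h1, h2, h3⟩ := exists_edgesOf h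
    exact ⟨f, ⟨h1, h2⟩, h3⟩
  · rintro ⟨f, ⟨h1, h2⟩, rfl⟩
    exact isSpanningTree_edgesOf h1 h2

/-- Matrix–tree theorem: the sum over spanning trees of the product of the edge weights is the
determinant of the Laplacian with the row and column of `none` removed. -/
lemma matrix_tree (G : SimpleGraph (Option V)) (w : Sym2 (Option V) → ℝ)
    (a : V → Option V → ℝ) (ha : ∀ i o, a i o = if G.Adj (some i) o then w s(some i, o) else 0) :
    ∑ T ∈ STrees G, ∏ e ∈ T, w e =
      (Matrix.of fun i j => ∑ o : Option V, a i o *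
      ((if i = j then 1 else 0) - (if o = some j then 1 else 0)) : Matrix V V ℝ).det := by
  rw [det_expand, STrees_eq, Finset.sum_image]
  · rw [← Finset.filter_filter, Finset.sum_filter]
    refine Finset.sum_congr rfl fun f hf => ?_
    have hac : Acyc f := by simpa using hf
    rw [prod_edgesOf hac]
    split_ifs with h
    · exact Finset.prod_congr rfl fun i _ => by rw [ha, if_pos (h i)]
    · push Not at h
      obtain ⟨i, hi⟩ := h
      exact (Finset.prod_eq_zero (Finset.mem_univ i) (by rw [ha, if_neg hi])).symm
  · intro f hf g hg h
    exact edgesOf_injOn (by simp at hf; exact hf.1) (by simp at hg; exact hg.1) h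

end MatrixTree

/-! ### The Gibbs factor -/

section Gibbs

open scoped Matrix

variable {V : Type*} [Fintype V] [DecidableEq V]

/-- The edge weights as a symmetric matrix vanishing off the edges. -/
noncomputable def Wmat (G : SimpleGraph V) (β : V → V → ℝ) : Matrix V V ℝ :=
  Matrix.of fun i j => if G.Adj i j then β i j else 0

/-- The potential `h_i(t) = ∑_k W_ik e^{t_k - t_i} + ε_i e^{-t_i}`, for which `e^t` solves
`H(h) e^t = ε`. -/
noncomputable def hvec (W : Matrix V V ℝ) (ε t : V → ℝ) : V → ℝ := fun i =>
  ∑ k, W i k * exp (t k - t i) + ε i * exp (-t i)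

/-- The Laplacian of the weights `W_ij e^{t_i + t_j}` with killing `ε_i e^{t_i}`, written as the
congruence `e^t H(h(t)) e^t`. -/
noncomputable def Lap (W : Matrix V V ℝ) (ε t : V → ℝ) : Matrix V V ℝ :=
  Matrix.of fun i j => exp (t i) * Hm W (hvec W ε t) i j * exp (t j)

lemma Wmat_isSymm {G : SimpleGraph V} {β : V → V → ℝ} (hβ : ∀ i j, β i j = β j i) :
    (Wmat G β).IsSymm := by
  ext i j
  simp [Wmat, G.adj_comm, hβ i j]

lemma Wmat_nonneg {G : SimpleGraph V} {β : V → V → ℝ} (hβ : ∀ i j, G.Adj i j → 0 < β i j)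
    (i j : V) : 0 ≤ Wmat G β i j := by
  simp only [Wmat, Matrix.of_apply]
  split_ifs with h
  · exact (hβ i j h).le
  · rfl

lemma exp_mul_hvec (W : Matrix V V ℝ) (ε t : V → ℝ) (i : V) :
    exp (t i) * hvec W ε t i = ∑ k, W i k * exp (t k) + ε i := by
  rw [hvec, mul_add, Finset.mul_sum]
  congr 1
  · refine Finset.sum_congr rfl fun k _ => ?_
    rw [mul_left_comm, ← exp_add]
    congr 2
    ring
  · rw [mul_left_comm, ← exp_add]
    simp

lemma Lap_apply (W : Matrix V V ℝ) (ε t : V → ℝ) (i j : V) :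
    Lap W ε t i j = (if i = j then ∑ k, W i k * exp (t i + t k) + ε i * exp (t i) else 0) -
      W i j * exp (t i + t j) := by
  rw [Lap, Matrix.of_apply, Hm_apply]
  rw [mul_sub, sub_mul, exp_add]
  congr 1
  · split_ifs with h
    · subst h
      rw [exp_mul_hvec, add_mul, Finset.sum_mul]
      congr 1
      refine Finset.sum_congr rfl fun k _ => ?_
      rw [exp_add]
      ring
    · simp
  · ring

/-- The Laplacian as an energy form. -/
lemma Lap_form {W : Matrix V V ℝ} (hW : W.IsSymm) (ε t s : V → ℝ) :
    s ⬝ᵥ (Lap W ε t *ᵥ s) = ∑ i, ε i * exp (t i) * s i ^ 2 +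
      (1 / 2) * ∑ i, ∑ j, W i j * exp (t i + t j) * (s i - s j) ^ 2 := by
  have h1 : s ⬝ᵥ (Lap W ε t *ᵥ s) = ∑ i, ε i * exp (t i) * s i ^ 2 +
      (∑ i, ∑ j, W i j * exp (t i + t j) * s i ^ 2 -
        ∑ i, ∑ j, W i j * exp (t i + t j) * (s i * s j)) := by
    simp only [dotProduct, Matrix.mulVec, Lap_apply, sub_mul, Finset.sum_sub_distrib, ite_mul,
      zero_mul, Finset.sum_ite_eq, Finset.mem_univ, if_true, mul_sub, add_mul, mul_add,
      Finset.sum_add_distrib, Finset.sum_mul, Finset.mul_sum]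
    have e1 : ∀ i j, s i * (W i j * exp (t i + t j) * s i) = W i j * exp (t i + t j) * s i ^ 2 :=
      fun i j => by ring
    have e2 : ∀ i, s i * (ε i * exp (t i) * s i) = ε i * exp (t i) * s i ^ 2 := fun i => by ring
    have e3 : ∀ i j, s i * (W i j * exp (t i + t j) * s j) =
      W i j * exp (t i + t j) * (s i * s j) := fun i j => by ring
    simp only [e1, e2, e3]
    ring
  have h2 : ∑ i, ∑ j, W i j * exp (t i + t j) * s j ^ 2 =
      ∑ i, ∑ j, W i j * exp (t i + t j) * s i ^ 2 := by
    rw [Finset.sum_comm]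
    refine Finset.sum_congr rfl fun i _ => Finset.sum_congr rfl fun j _ => ?_
    rw [hW.apply, add_comm]
  have h3 : ∑ i, ∑ j, W i j * exp (t i + t j) * (s i - s j) ^ 2 =
      ∑ i, ∑ j, W i j * exp (t i + t j) * s i ^ 2 +
        ∑ i, ∑ j, W i j * exp (t i + t j) * s j ^ 2 -
        2 * ∑ i, ∑ j, W i j * exp (t i + t j) * (s i * s j) := by
    simp only [Finset.mul_sum, ← Finset.sum_add_distrib, ← Finset.sum_sub_distrib]
    refine Finset.sum_congr rfl fun i _ => Finset.sum_congr rfl fun j _ => ?_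
    ring
  rw [h1, h3, h2]
  ring

omit [Fintype V] [DecidableEq V] in
lemma aug_adj_some_some (G : SimpleGraph V) (i j : V) :
    (aug G).Adj (some i) (some j) ↔ G.Adj i j := by
  simp only [aug, SimpleGraph.fromRel_adj]
  constructor
  · rintro ⟨-, h | h⟩
    · exact h
    · exact h.symm
  · intro h
    exact ⟨by simpa using h.ne, Or.inl h⟩

omit [Fintype V] [DecidableEq V] in
lemma aug_adj_some_none (G : SimpleGraph V) (i : V) : (aug G).Adj (some i) none := by
  simp [aug, SimpleGraph.fromRel_adj]

lemma sum_edges {α : Type*} [Fintype α] (H : SimpleGraph α) (F : Sym2 α → ℝ) :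
    ∑ e : Sym2 α with e ∈ H.edgeSet, F e =
      (1 / 2) * ∑ a, ∑ b, if H.Adj a b then F s(a, b) else 0 := by
  have h1 : ∑ a, ∑ b, (if H.Adj a b then F s(a, b) else 0) =
      ∑ p : α × α with H.Adj p.1 p.2, F s(p.1, p.2) := by
    rw [Finset.sum_filter, Fintype.sum_prod_type]
  rw [h1, ← Finset.sum_fiberwise_of_maps_to (s := Finset.univ.filter fun p : α × α => H.Adj p.1 p.2)
    (t := Finset.univ.filter fun e : Sym2 α => e ∈ H.edgeSet)
    (g := fun p => s(p.1, p.2)) (by simp), Finset.mul_sum]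
  refine Finset.sum_congr rfl fun e he => ?_
  induction e using Sym2.ind with
  | _ x y =>
    have hxy : H.Adj x y := by simpa using he
    have h2 : ((Finset.univ.filter fun p : α × α => H.Adj p.1 p.2).filter
        fun p => s(p.1, p.2) = s(x, y)) = {(x, y), (y, x)} := by
      ext ⟨a, b⟩
      simp only [Finset.mem_filter, Finset.mem_univ, true_and, Sym2.eq_iff, Finset.mem_insert,
        Finset.mem_singleton, Prod.mk.injEq]
      constructor
      · exact fun h => h.2
      · rintro (⟨rfl, rfl⟩ | ⟨rfl, rfl⟩)
        · exact ⟨hxy, Or.inl ⟨rfl, rfl⟩⟩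
        · exact ⟨hxy.symm, Or.inr ⟨rfl, rfl⟩⟩
    rw [h2, Finset.sum_pair (by simpa using fun h => absurd h hxy.ne), Sym2.eq_swap (a := y)]
    ring

lemma sum_aug_edges (G : SimpleGraph V) (F : Sym2 (Option V) → ℝ) :
    ∑ e : Sym2 (Option V) with e ∈ (aug G).edgeSet, F e =
      ∑ i, F s(some i, none) +
        (1 / 2) * ∑ i, ∑ j, if G.Adj i j then F s(some i, some j) else 0 := by
  rw [sum_edges]
  simp only [Fintype.sum_option, aug_adj_some_some, aug_adj_some_none,
    (aug_adj_some_none G _).symm, SimpleGraph.irrefl, if_true, if_false,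
    Finset.sum_add_distrib, Sym2.eq_swap (a := none)]
  ring

lemma gibbs_some_none (β : V → V → ℝ) (ε t s : V → ℝ) (i : V) :
    gibbs β ε t s s(some i, none) =
      exp (-(ε i * (cosh (t i) - 1 + (1 / 2) * s i ^ 2 * exp (t i)))) := by
  simp only [gibbs, esym, Sym2.lift_mk, bres, Bfun, extV, Option.elim, sub_zero, zero_sub,
    cosh_neg, add_zero, zero_add, neg_sq]
  rw [add_self_div_two]
  congr 1
  ring

lemma gibbs_some_some {β : V → V → ℝ} (hβ : ∀ i j, β i j = β j i) (ε t s : V → ℝ) (i j : V) :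
    gibbs β ε t s s(some i, some j) =
      exp (-(β i j * (cosh (t i - t j) - 1 + (1 / 2) * (s i - s j) ^ 2 * exp (t i + t j)))) := by
  have h : Bfun t s (some j) (some i) = Bfun t s (some i) (some j) := by
    simp only [Bfun, extV, Option.elim]
    rw [← cosh_neg, neg_sub, ← neg_sq, neg_sub, add_comm (t j)]
  simp only [gibbs, esym, Sym2.lift_mk, h]
  simp only [bres, hβ j i]
  rw [add_self_div_two]
  simp only [Bfun, extV, Option.elim]
  congr 1
  ring

/-- The product of the Gibbs factors in terms of the potential `h(t)`. -/
lemma prod_gibbs (G : SimpleGraph V) {β : V → V → ℝ} (hβ : ∀ i j, β i j = β j i)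
    (ε t s : V → ℝ) :
    ∏ e : Sym2 (Option V) with e ∈ (aug G).edgeSet, gibbs β ε t s e =
      exp (∑ i, ε i) * exp (-(1 / 2) * (∑ i, ∑ j, Hm (Wmat G β) (hvec (Wmat G β) ε t) i j) -
        (1 / 2) * ∑ i, ε i * exp (t i)) *
        exp (-(1 / 2) * (s ⬝ᵥ (Lap (Wmat G β) ε t *ᵥ s))) := by
  set W := Wmat G β with hWdef
  have hW : W.IsSymm := Wmat_isSymm hβ
  have hpos : ∀ e ∈ Finset.univ.filter (fun e : Sym2 (Option V) => e ∈ (aug G).edgeSet),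
      gibbs β ε t s e = exp (log (gibbs β ε t s e)) := by
    intro e _
    rw [exp_log]
    induction e using Sym2.ind with
    | _ a b =>
      simp only [gibbs, esym, Sym2.lift_mk]
      positivity
  rw [Finset.prod_congr rfl hpos, ← exp_sum, ← exp_add, ← exp_add, sum_aug_edges, Lap_form hW]
  congr 1
  simp only [gibbs_some_none, gibbs_some_some hβ, log_exp]
  have h1 : ∀ i j, (if G.Adj i j then
      -(β i j * (cosh (t i - t j) - 1 + (1 / 2) * (s i - s j) ^ 2 * exp (t i + t j))) else 0) =
      W i j - (1 / 2) * (W i j * exp (t i - t j)) - (1 / 2) * (W i j * exp (t j - t i)) -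
        (1 / 2) * (W i j * exp (t i + t j) * (s i - s j) ^ 2) := by
    intro i j
    simp only [hWdef, Wmat, Matrix.of_apply]
    split_ifs
    · rw [cosh_eq, neg_sub]
      ring
    · simp
  have h2 : ∀ i, -(ε i * (cosh (t i) - 1 + (1 / 2) * s i ^ 2 * exp (t i))) =
      ε i - (1 / 2) * (ε i * exp (t i)) - (1 / 2) * (ε i * exp (-t i)) -
        (1 / 2) * (ε i * exp (t i) * s i ^ 2) := by
    intro i
    rw [cosh_eq]
    ring
  have h3 : ∑ i, ∑ j, W i j * exp (t i - t j) = ∑ i, ∑ j, W i j * exp (t j - t i) := by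
    rw [Finset.sum_comm]
    refine Finset.sum_congr rfl fun i _ => Finset.sum_congr rfl fun j _ => ?_
    rw [hW.apply]
  have h4 : ∑ i, ∑ j, Hm W (hvec W ε t) i j =
      ∑ i, ∑ j, W i j * exp (t j - t i) + ∑ i, ε i * exp (-t i) - ∑ i, ∑ j, W i j := by
    simp only [Hm_apply, Finset.sum_sub_distrib, Finset.sum_ite_eq, Finset.mem_univ, if_true,
      hvec, Finset.sum_add_distrib]
  simp only [h1, h2, h4, Finset.sum_sub_distrib, ← Finset.mul_sum, h3]
  ring

end Gibbs

/-! ### Gaussian integrals -/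

section Gaussian

open scoped Matrix MatrixOrder Matrix.Norms.L2Operator

variable {V : Type*} [Fintype V] [DecidableEq V]

lemma exists_factor {A : Matrix V V ℝ} (hA : A.PosDef) :
    ∃ C : Matrix V V ℝ, A = Cᵀ * C := by
  obtain ⟨C, hC⟩ := CStarAlgebra.nonneg_iff_eq_star_mul_self.mp hA.posSemidef.nonneg
  exact ⟨C, by rw [hC, Matrix.star_eq_conjTranspose, Matrix.conjTranspose_eq_transpose_of_trivial]⟩

lemma lintegral_standard_gauss :
    ∫⁻ u : V → ℝ, ENNReal.ofReal (exp (-(1 / 2) * (u ⬝ᵥ u))) =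
      ENNReal.ofReal (√(2 * π) ^ Fintype.card V) := by
  have h1 : ∀ u : V → ℝ, exp (-(1 / 2) * (u ⬝ᵥ u)) = ∏ i, exp (-(1 / 2) * u i ^ 2) := fun u => by
    rw [← exp_sum, ← Finset.mul_sum]
    simp only [dotProduct, pow_two]
  have hint : Integrable (fun x : ℝ => exp (-(1 / 2) * x ^ 2)) :=
    integrable_exp_neg_mul_sq (by norm_num)
  simp only [h1]
  rw [← ofReal_integral_eq_lintegral_ofReal]
  · rw [integral_fintype_prod_volume_eq_pow (fun x : ℝ => exp (-(1 / 2) * x ^ 2)),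
      integral_gaussian]
    congr 3
    ring
  · exact Integrable.fintype_prod (f := fun _ x => exp (-(1 / 2) * x ^ 2)) fun _ => hint
  · exact ae_of_all _ fun u => Finset.prod_nonneg fun i _ => (exp_pos _).le

lemma lintegral_gauss {A : Matrix V V ℝ} (hA : A.PosDef) :
    ∫⁻ s : V → ℝ, ENNReal.ofReal (exp (-(1 / 2) * (s ⬝ᵥ (A *ᵥ s)))) =
      ENNReal.ofReal (√(2 * π) ^ Fintype.card V / √A.det) := by
  obtain ⟨C, hC⟩ := exists_factor hA
  have hdet : A.det = C.det ^ 2 := by rw [hC, Matrix.det_mul, Matrix.det_transpose, pow_two]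
  have hC0 : C.det ≠ 0 := fun h => by
    have := hA.det_pos
    rw [hdet, h] at this
    simp at this
  have h1 : ∀ s, s ⬝ᵥ (A *ᵥ s) = (Matrix.toLin' C s) ⬝ᵥ (Matrix.toLin' C s) := fun s => by
    rw [Matrix.toLin'_apply, hC, ← Matrix.mulVec_mulVec, Matrix.dotProduct_mulVec,
      Matrix.vecMul_transpose]
  have hm : Measurable (Matrix.toLin' C) :=
    (LinearMap.continuous_of_finiteDimensional _).measurable
  have hg : Measurable fun u : V → ℝ => ENNReal.ofReal (exp (-(1 / 2) * (u ⬝ᵥ u))) := by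
    refine Measurable.ennreal_ofReal (Continuous.measurable ?_)
    fun_prop
  simp only [h1]
  rw [← lintegral_map (f := fun u : V → ℝ => ENNReal.ofReal (exp (-(1 / 2) * (u ⬝ᵥ u)))) hg hm,
    Real.map_matrix_volume_pi_eq_smul_volume_pi hC0, lintegral_smul_measure,
    lintegral_standard_gauss, smul_eq_mul, ← ENNReal.ofReal_mul (abs_nonneg _), hdet, sqrt_sq_eq_abs,
    abs_inv]
  congr 1
  ring

end Gaussian

/-! ### Change of variables from `t` to the potential -/

section ChangeOfVariables

open scoped Matrix

variable {V : Type*} [Fintype V] [DecidableEq V]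

lemma forall_of_connected {G : SimpleGraph V} (hG : G.Connected) {P : V → Prop}
    (hP : ∀ i j, G.Adj i j → P i → P j) {a : V} (ha : P a) (b : V) : P b := by
  obtain ⟨w⟩ := hG a b
  induction w with
  | nil => exact ha
  | cons h _ ih => exact ih (hP _ _ h ha)

lemma Lap_isHermitian {W : Matrix V V ℝ} (hW : W.IsSymm) (ε t : V → ℝ) :
    (Lap W ε t).IsHermitian := by
  ext i j
  have := (Hm_isHermitian hW (hvec W ε t)).apply i j
  simp only [star_trivial] at this
  simp only [Matrix.conjTranspose_apply, star_trivial, Lap, Matrix.of_apply, this]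
  ring

lemma Lap_posDef {G : SimpleGraph V} (hG : G.Connected) {β : V → V → ℝ}
    (hβ : ∀ i j, β i j = β j i) (hβ0 : ∀ i j, G.Adj i j → 0 < β i j) {ε : V → ℝ}
    (hε : ∀ i, 0 ≤ ε i) (hε' : ∃ i, 0 < ε i) (t : V → ℝ) : (Lap (Wmat G β) ε t).PosDef := by
  have hW := Wmat_isSymm (G := G) hβ
  refine Matrix.PosDef.of_dotProduct_mulVec_pos (Lap_isHermitian hW ε t) fun s hs => ?_
  rw [star_trivial, Lap_form hW]
  have h1 : ∀ i, 0 ≤ ε i * exp (t i) * s i ^ 2 := fun i => by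
    have := hε i
    positivity
  have h2 : ∀ i j, 0 ≤ Wmat G β i j * exp (t i + t j) * (s i - s j) ^ 2 := fun i j => by
    have := Wmat_nonneg hβ0 i j
    positivity
  have h3 := Finset.sum_nonneg fun i (_ : i ∈ Finset.univ) => h1 i
  have h4 := Finset.sum_nonneg fun i (_ : i ∈ Finset.univ) =>
    Finset.sum_nonneg fun j (_ : j ∈ Finset.univ) => h2 i j
  by_contra hcon
  have h5 : ∑ i, ε i * exp (t i) * s i ^ 2 = 0 := by linarith
  have h6 : ∑ i, ∑ j, Wmat G β i j * exp (t i + t j) * (s i - s j) ^ 2 = 0 := by linarith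
  rw [Finset.sum_eq_zero_iff_of_nonneg fun i _ => h1 i] at h5
  rw [Finset.sum_eq_zero_iff_of_nonneg fun i _ => Finset.sum_nonneg fun j _ => h2 i j] at h6
  obtain ⟨a, ha⟩ := hε'
  have hsa : s a = 0 := by
    have := h5 a (Finset.mem_univ _)
    have h7 := exp_pos (t a)
    simpa [ha.ne', h7.ne'] using this
  apply hs
  funext b
  refine forall_of_connected hG (P := fun i => s i = 0) (fun i j hij hi => ?_) hsa b
  have h7 := (Finset.sum_eq_zero_iff_of_nonneg fun j _ => h2 i j).1 (h6 i (Finset.mem_univ _)) j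
    (Finset.mem_univ _)
  have h8 : Wmat G β i j ≠ 0 := by simpa [Wmat, hij] using (hβ0 i j hij).ne'
  have h9 : s i - s j = 0 := by simpa [h8, (exp_pos _).ne'] using h7
  linarith

lemma Hm_posDef_of_Lap {W : Matrix V V ℝ} (hW : W.IsSymm) {ε t : V → ℝ}
    (h : (Lap W ε t).PosDef) : (Hm W (hvec W ε t)).PosDef := by
  refine Matrix.PosDef.of_dotProduct_mulVec_pos (Hm_isHermitian hW _) fun x hx => ?_
  have hy : (fun i => exp (-t i) * x i) ≠ 0 := fun h0 => hx (by
    funext i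
    have := congrFun h0 i
    simpa using this)
  have h1 := h.dotProduct_mulVec_pos hy
  have h2 : star (fun i => exp (-t i) * x i) ⬝ᵥ (Lap W ε t *ᵥ fun i => exp (-t i) * x i) =
      star x ⬝ᵥ (Hm W (hvec W ε t) *ᵥ x) := by
    simp only [star_trivial, dotProduct, Matrix.mulVec, Lap, Matrix.of_apply, Finset.mul_sum]
    refine Finset.sum_congr rfl fun i _ => Finset.sum_congr rfl fun j _ => ?_
    have e1 : exp (-t i) * exp (t i) = 1 := by rw [← exp_add]; simp
    have e2 : exp (-t j) * exp (t j) = 1 := by rw [← exp_add]; simp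
    calc _ = (exp (-t i) * exp (t i)) * (exp (-t j) * exp (t j)) *
          (x i * (Hm W (hvec W ε t) i j * x j)) := by ring
      _ = _ := by rw [e1, e2]; ring
  rwa [h2] at h1

lemma det_Lap (W : Matrix V V ℝ) (ε t : V → ℝ) :
    (Lap W ε t).det = (∏ i, exp (t i)) ^ 2 * (Hm W (hvec W ε t)).det := by
  have h : Lap W ε t = Matrix.diagonal (fun i => exp (t i)) * Hm W (hvec W ε t) *
      Matrix.diagonal (fun i => exp (t i)) := by
    ext i j
    rw [Matrix.mul_diagonal, Matrix.diagonal_mul]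
    rfl
  rw [h, Matrix.det_mul, Matrix.det_mul, Matrix.det_diagonal]
  ring

/-- `e^t` solves `H(h(t)) ψ = ε`. -/
lemma Hm_hvec_mulVec (W : Matrix V V ℝ) (ε t : V → ℝ) :
    Hm W (hvec W ε t) *ᵥ (fun i => exp (t i)) = ε := by
  funext i
  have := exp_mul_hvec W ε t i
  simp only [Matrix.mulVec, dotProduct, Hm_apply, sub_mul, Finset.sum_sub_distrib, ite_mul,
    zero_mul, Finset.sum_ite_eq, Finset.mem_univ, if_true]
  linarith

lemma inv_Hm_hvec {W : Matrix V V ℝ} {ε t : V → ℝ} (h : (Hm W (hvec W ε t)).PosDef) :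
    (Hm W (hvec W ε t))⁻¹ *ᵥ ε = fun i => exp (t i) := by
  have h1 := congrArg (fun v => (Hm W (hvec W ε t))⁻¹ *ᵥ v) (Hm_hvec_mulVec W ε t)
  simp only [Matrix.mulVec_mulVec] at h1
  rw [Matrix.nonsing_inv_mul _ (isUnit_det_of_posDef h), Matrix.one_mulVec] at h1
  exact h1.symm

/-- The Jacobian matrix of `t ↦ h(t)`. -/
noncomputable def jac (W : Matrix V V ℝ) (ε t : V → ℝ) : Matrix V V ℝ :=
  Matrix.of fun i j => -(exp (-t i) * Hm W (hvec W ε t) i j * exp (t j))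

lemma abs_det_jac {W : Matrix V V ℝ} {ε t : V → ℝ} (h : (Hm W (hvec W ε t)).PosDef) :
    |(jac W ε t).det| = (Hm W (hvec W ε t)).det := by
  have h1 : jac W ε t = -(Matrix.diagonal (fun i => exp (-t i)) * Hm W (hvec W ε t) *
      Matrix.diagonal (fun i => exp (t i))) := by
    ext i j
    rw [Matrix.neg_apply, Matrix.mul_diagonal, Matrix.diagonal_mul]
    rfl
  have h2 : (∏ i, exp (-t i)) * ∏ i, exp (t i) = 1 := by
    rw [← Finset.prod_mul_distrib]
    exact Finset.prod_eq_one fun i _ => by rw [← exp_add]; simp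
  rw [h1, Matrix.det_neg, Matrix.det_mul, Matrix.det_mul, Matrix.det_diagonal, Matrix.det_diagonal,
    abs_mul, abs_pow, abs_neg, abs_one, one_pow, one_mul, mul_right_comm, h2, one_mul,
    abs_of_pos h.det_pos]

lemma hasFDerivAt_hvec (W : Matrix V V ℝ) (ε t : V → ℝ) :
    HasFDerivAt (hvec W ε) (Matrix.toLin' (jac W ε t)).toContinuousLinearMap t := by
  rw [hasFDerivAt_pi']
  intro i
  have hp : ∀ k, HasFDerivAt (fun t : V → ℝ => t k) (ContinuousLinearMap.proj (R := ℝ) k) t :=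
    fun k => hasFDerivAt_apply k t
  have h1 : HasFDerivAt (fun t : V → ℝ => ∑ k, W i k * exp (t k - t i) + ε i * exp (-t i))
      (∑ k, W i k • (exp (t k - t i) • (ContinuousLinearMap.proj (R := ℝ) (φ := fun _ : V => ℝ) k -
        ContinuousLinearMap.proj i)) + ε i • (exp (-t i) • -ContinuousLinearMap.proj i)) t :=
    (HasFDerivAt.fun_sum fun k _ => ((hp k).sub (hp i)).exp.const_mul (W i k)).add
      ((hp i).neg.exp.const_mul (ε i))
  refine h1.congr_fderiv ?_
  ext v
  simp only [add_apply, sum_apply,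
    smul_apply, sub_apply, neg_apply,
    ContinuousLinearMap.proj_apply, ContinuousLinearMap.comp_apply, smul_eq_mul,
    LinearMap.coe_toContinuousLinearMap', Matrix.toLin'_apply, Matrix.mulVec, dotProduct, jac,
    Matrix.of_apply, Hm_apply]
  have h2 : ∀ k, -(exp (-t i) * ((if i = k then hvec W ε t i else 0) - W i k) * exp (t k)) * v k =
      W i k * exp (t k - t i) * v k - if i = k then hvec W ε t i * v i else 0 := by
    intro k
    rw [sub_eq_add_neg (t k), exp_add]
    split_ifs with h
    · subst h
      have e1 : exp (-t i) * exp (t i) = 1 := by rw [← exp_add]; simp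
      linear_combination (-hvec W ε t i * v i) * e1
    · ring
  simp only [h2, Finset.sum_sub_distrib, Finset.sum_ite_eq, Finset.mem_univ, if_true]
  simp only [hvec, add_mul, mul_sub, Finset.sum_mul, Finset.sum_sub_distrib, ← mul_assoc]
  ring

lemma hvec_injective {W : Matrix V V ℝ} {ε : V → ℝ}
    (h : ∀ t, (Hm W (hvec W ε t)).PosDef) : Function.Injective (hvec W ε) := by
  intro t t' htt
  have h1 := inv_Hm_hvec (h t)
  rw [htt, inv_Hm_hvec (h t')] at h1
  funext i
  exact (exp_injective (congrFun h1 i)).symm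

/-- Strict positivity of the solution `ψ` of `H ψ = ε`: a zero would propagate along the edges. -/
lemma inv_mulVec_pos {G : SimpleGraph V} (hG : G.Connected) {β : V → V → ℝ}
    (hβ0 : ∀ i j, G.Adj i j → 0 < β i j) {ε : V → ℝ}
    (hε : ∀ i, 0 ≤ ε i) (hε' : ∃ i, 0 < ε i) {h : V → ℝ} (hH : (Hm (Wmat G β) h).PosDef) (a : V) :
    0 < ((Hm (Wmat G β) h)⁻¹ *ᵥ ε) a := by
  set ψ := (Hm (Wmat G β) h)⁻¹ *ᵥ ε with hψ
  have h0 : ∀ i, 0 ≤ ψ i := inv_mulVec_nonneg (Wmat_nonneg hβ0) hH hε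
  have h1 : Hm (Wmat G β) h *ᵥ ψ = ε := by
    rw [hψ, Matrix.mulVec_mulVec, Matrix.mul_nonsing_inv _ (isUnit_det_of_posDef hH),
      Matrix.one_mulVec]
  have h2 : ∀ i, h i * ψ i = ∑ k, Wmat G β i k * ψ k + ε i := fun i => by
    have := congrFun h1 i
    simp only [Matrix.mulVec, dotProduct, Hm_apply, sub_mul, Finset.sum_sub_distrib, ite_mul,
      zero_mul, Finset.sum_ite_eq, Finset.mem_univ, if_true] at this
    linarith
  have h3 : ∀ i, 0 ≤ ∑ k, Wmat G β i k * ψ k := fun i =>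
    Finset.sum_nonneg fun k _ => mul_nonneg (Wmat_nonneg hβ0 _ _) (h0 k)
  refine lt_of_le_of_ne (h0 a) fun ha => ?_
  have hz : ∀ b, ψ b = 0 := by
    refine forall_of_connected hG (P := fun i => ψ i = 0) (fun i j hij hi => ?_) ha.symm
    have h4 := h2 i
    rw [hi, mul_zero] at h4
    have h5 : ∑ k, Wmat G β i k * ψ k = 0 := by linarith [h3 i, hε i]
    have h6 := (Finset.sum_eq_zero_iff_of_nonneg fun k _ =>
      mul_nonneg (Wmat_nonneg hβ0 _ _) (h0 k)).1 h5 j (Finset.mem_univ _)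
    have h7 : Wmat G β i j ≠ 0 := by simpa [Wmat, hij] using (hβ0 i j hij).ne'
    simpa [h7] using h6
  obtain ⟨b, hb⟩ := hε'
  have := h2 b
  simp [hz] at this
  linarith

lemma hvec_log {W : Matrix V V ℝ} {ε h : V → ℝ} (hH : (Hm W h).PosDef)
    (hpos : ∀ a, 0 < ((Hm W h)⁻¹ *ᵥ ε) a) :
    hvec W ε (fun i => log (((Hm W h)⁻¹ *ᵥ ε) i)) = h := by
  set ψ := (Hm W h)⁻¹ *ᵥ ε with hψ
  have h1 : Hm W h *ᵥ ψ = ε := by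
    rw [hψ, Matrix.mulVec_mulVec, Matrix.mul_nonsing_inv _ (isUnit_det_of_posDef hH),
      Matrix.one_mulVec]
  funext i
  have h2 := exp_mul_hvec W ε (fun i => log (ψ i)) i
  simp only [exp_log (hpos _)] at h2
  have h3 := congrFun h1 i
  simp only [Matrix.mulVec, dotProduct, Hm_apply, sub_mul, Finset.sum_sub_distrib, ite_mul,
    zero_mul, Finset.sum_ite_eq, Finset.mem_univ, if_true] at h3
  refine mul_left_cancel₀ (hpos i).ne' (h2.trans ?_)
  linarith

/-- Substituting the potential `h(t)` for `t`. -/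
lemma lintegral_hvec {G : SimpleGraph V} (hG : G.Connected) {β : V → V → ℝ}
    (hβ : ∀ i j, β i j = β j i) (hβ0 : ∀ i j, G.Adj i j → 0 < β i j) {ε : V → ℝ}
    (hε : ∀ i, 0 ≤ ε i) (hε' : ∃ i, 0 < ε i) {g : (V → ℝ) → ENNReal}
    (hg : ∀ h, ¬ (Hm (Wmat G β) h).PosDef → g h = 0) :
    ∫⁻ t, ENNReal.ofReal (Hm (Wmat G β) (hvec (Wmat G β) ε t)).det * g (hvec (Wmat G β) ε t) =
      ∫⁻ h, g h := by
  have hW := Wmat_isSymm (G := G) hβ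
  have hpd : ∀ t, (Hm (Wmat G β) (hvec (Wmat G β) ε t)).PosDef := fun t =>
    Hm_posDef_of_Lap hW (Lap_posDef hG hβ hβ0 hε hε' t)
  have himg : hvec (Wmat G β) ε '' Set.univ = {h | (Hm (Wmat G β) h).PosDef} := by
    ext h
    constructor
    · rintro ⟨t, -, rfl⟩
      exact hpd t
    · intro hh
      exact ⟨_, trivial, hvec_log hh (inv_mulVec_pos hG hβ0 hε hε' hh)⟩
  have h1 := lintegral_image_eq_lintegral_abs_det_fderiv_mul volume MeasurableSet.univ
    (fun t _ => (hasFDerivAt_hvec (Wmat G β) ε t).hasFDerivWithinAt) (hvec_injective hpd).injOn g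
  rw [himg, ← lintegral_indicator (measurableSet_posDef hW), Measure.restrict_univ] at h1
  have h2 : {h | (Hm (Wmat G β) h).PosDef}.indicator g = g := by
    rw [Set.indicator_eq_self]
    intro h hh
    by_contra hcon
    exact hh (hg h hcon)
  rw [h2] at h1
  rw [h1]
  refine lintegral_congr fun t => ?_
  congr 2
  rw [← abs_det_jac (hpd t)]
  congr 1
  exact (LinearMap.det_toLin' _).symm

end ChangeOfVariables

/-! ### The Ward identity -/

section Ward

open scoped Matrix

variable {V : Type*} [Fintype V] [DecidableEq V]

lemma treeW_some_none (β : V → V → ℝ) (ε t : V → ℝ) (i : V) :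
    treeW β ε t s(some i, none) = ε i * exp (t i) := by
  simp only [treeW, esym, Sym2.lift_mk, bres, extV, Option.elim, add_zero, zero_add]
  ring

lemma treeW_some_some {β : V → V → ℝ} (hβ : ∀ i j, β i j = β j i) (ε t : V → ℝ) (i j : V) :
    treeW β ε t s(some i, some j) = β i j * exp (t i + t j) := by
  simp only [treeW, esym, Sym2.lift_mk, bres, extV, Option.elim, hβ j i, add_comm (t j)]
  ring

/-- The tree part of the density sums up to the determinant of the Laplacian. -/
lemma sum_trees (G : SimpleGraph V) {β : V → V → ℝ} (hβ : ∀ i j, β i j = β j i)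
    (ε t : V → ℝ) :
    ∑ T ∈ STrees (aug G), ∏ e ∈ T, treeW β ε t e = (Lap (Wmat G β) ε t).det := by
  rw [matrix_tree (aug G) (treeW β ε t)
    (fun i o => if (aug G).Adj (some i) o then treeW β ε t s(some i, o) else 0)
    (fun _ _ => rfl)]
  congr 1
  ext i j
  rw [Lap_apply, Matrix.of_apply]
  have h1 : ∀ k, (if G.Adj i k then β i k * exp (t i + t k) else 0) =
      Wmat G β i k * exp (t i + t k) := fun k => by
    simp only [Wmat, Matrix.of_apply, ite_mul, zero_mul]
  simp only [mul_sub, Finset.sum_sub_distrib, Fintype.sum_option, aug_adj_some_none, if_true,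
    aug_adj_some_some, treeW_some_none, treeW_some_some hβ, h1,
    mul_ite, mul_one, mul_zero, Finset.sum_ite_eq', Finset.mem_univ]
  congr 1
  split_ifs with h
  · rw [add_comm]
  · simp

omit [DecidableEq V] in
lemma continuous_dens (G : SimpleGraph V) (β : V → V → ℝ) (ε : V → ℝ)
    (T : Finset (Sym2 (Option V))) :
    Continuous fun p : (V → ℝ) × (V → ℝ) => dens G β ε p.1 p.2 T := by
  have h1 : ∀ a, Continuous fun p : (V → ℝ) × (V → ℝ) => extV p.1 a := by
    rintro (_ | i)
    · exact continuous_const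
    · exact (continuous_apply i).comp continuous_fst
  have h2 : ∀ a, Continuous fun p : (V → ℝ) × (V → ℝ) => extV p.2 a := by
    rintro (_ | i)
    · exact continuous_const
    · exact (continuous_apply i).comp continuous_snd
  have h3 : ∀ e, Continuous fun p : (V → ℝ) × (V → ℝ) => gibbs β ε p.1 p.2 e := by
    intro e
    induction e using Sym2.ind with
    | _ a b =>
      simp only [gibbs, esym, Sym2.lift_mk, Bfun]
      fun_prop
  have h4 : ∀ e, Continuous fun p : (V → ℝ) × (V → ℝ) => treeW β ε p.1 e := by
    intro e
    induction e using Sym2.ind with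
    | _ a b =>
      simp only [treeW, esym, Sym2.lift_mk]
      fun_prop
  unfold dens
  fun_prop

lemma dens_nonneg {G : SimpleGraph V} {β : V → V → ℝ} (hβ : ∀ i j, β i j = β j i)
    (hβ0 : ∀ i j, G.Adj i j → 0 < β i j) {ε : V → ℝ} (hε : ∀ i, 0 ≤ ε i) (t s : V → ℝ)
    {T : Finset (Sym2 (Option V))} (hT : T ∈ STrees (aug G)) : 0 ≤ dens G β ε t s T := by
  have hsub : ↑T ⊆ (aug G).edgeSet := (Finset.mem_filter.1 hT).2.1
  refine mul_nonneg (mul_nonneg ?_ ?_) ?_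
  · exact Finset.prod_nonneg fun j _ => by positivity
  · rw [prod_gibbs G hβ]
    positivity
  · refine Finset.prod_nonneg fun e he => ?_
    have he' := hsub he
    induction e using Sym2.ind with
    | _ a b =>
      have hab : (aug G).Adj a b := he'
      rcases a with _ | i <;> rcases b with _ | j
      · exact absurd hab ((aug G).irrefl)
      · rw [Sym2.eq_swap, treeW_some_none]
        exact mul_nonneg (hε _) (exp_pos _).le
      · rw [treeW_some_none]
        exact mul_nonneg (hε _) (exp_pos _).le
      · rw [treeW_some_some hβ]
        exact mul_nonneg (hβ0 i j ((aug_adj_some_some G i j).1 hab)).le (exp_pos _).le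

lemma sum_dens (G : SimpleGraph V) {β : V → V → ℝ} (hβ : ∀ i j, β i j = β j i)
    (ε t s : V → ℝ) (y : V) :
    ∑ T ∈ STrees (aug G), dens G β ε t s T * exp (t y) =
      ((∏ j, exp (-t j) / (2 * π)) * (exp (∑ i, ε i) *
        exp (-(1 / 2) * (∑ i, ∑ j, Hm (Wmat G β) (hvec (Wmat G β) ε t) i j) -
          (1 / 2) * ∑ i, ε i * exp (t i))) * (Lap (Wmat G β) ε t).det * exp (t y)) *
        exp (-(1 / 2) * (s ⬝ᵥ (Lap (Wmat G β) ε t *ᵥ s))) := by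
  rw [← Finset.sum_mul]
  simp only [dens]
  rw [← Finset.mul_sum, sum_trees G hβ, prod_gibbs G hβ]
  ring

/-- The integral over `s`, in terms of the potential `h(t)`. -/
lemma lintegral_s {G : SimpleGraph V} (hG : G.Connected) {β : V → V → ℝ}
    (hβ : ∀ i j, β i j = β j i) (hβ0 : ∀ i j, G.Adj i j → 0 < β i j) {ε : V → ℝ}
    (hε : ∀ i, 0 ≤ ε i) (hε' : ∃ i, 0 < ε i) (t : V → ℝ) (y : V) :
    ∫⁻ s : V → ℝ, ENNReal.ofReal (∑ T ∈ STrees (aug G), dens G β ε t s T * exp (t y)) =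
      ENNReal.ofReal ((√(2 * π) ^ Fintype.card V)⁻¹ * exp (∑ i, ε i)) *
      (ENNReal.ofReal (Hm (Wmat G β) (hvec (Wmat G β) ε t)).det *
        ENNReal.ofReal (Psi (Wmat G β) ε y (hvec (Wmat G β) ε t))) := by
  have hW := Wmat_isSymm (G := G) hβ
  have hL := Lap_posDef hG hβ hβ0 hε hε' t
  have hH := Hm_posDef_of_Lap hW hL
  simp only [sum_dens G hβ]
  have h0 : 0 ≤ ((∏ j, exp (-t j) / (2 * π)) * (exp (∑ i, ε i) *
        exp (-(1 / 2) * (∑ i, ∑ j, Hm (Wmat G β) (hvec (Wmat G β) ε t) i j) -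
          (1 / 2) * ∑ i, ε i * exp (t i))) * (Lap (Wmat G β) ε t).det * exp (t y)) := by
    have := hL.det_pos.le
    have h1 : 0 ≤ ∏ j, exp (-t j) / (2 * π) := Finset.prod_nonneg fun j _ => by positivity
    positivity
  simp only [ENNReal.ofReal_mul h0]
  rw [lintegral_const_mul' _ _ ENNReal.ofReal_ne_top, lintegral_gauss hL, ← ENNReal.ofReal_mul h0,
    ← ENNReal.ofReal_mul hH.det_pos.le, ← ENNReal.ofReal_mul (by positivity)]
  congr 1
  rw [Psi, Phi, if_pos hH, inv_Hm_hvec hH, det_Lap]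
  set d := (Hm (Wmat G β) (hvec (Wmat G β) ε t)).det with hd
  have hd0 : 0 < d := hH.det_pos
  set P := ∏ i, exp (t i) with hP
  have hP0 : 0 < P := Finset.prod_pos fun i _ => exp_pos _
  have h2 : ∏ j, exp (-t j) / (2 * π) = P⁻¹ * ((√(2 * π) ^ Fintype.card V)⁻¹) ^ 2 := by
    rw [Finset.prod_div_distrib, Finset.prod_const, Finset.card_univ, hP, ← Finset.prod_inv_distrib,
      inv_pow, ← pow_mul, mul_comm (Fintype.card V), pow_mul, sq_sqrt (by positivity), div_eq_mul_inv]
    simp only [exp_neg]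
  have h3 : √(P ^ 2 * d) = P * √d := by rw [sqrt_mul (sq_nonneg P), sqrt_sq hP0.le]
  have h4 : ε ⬝ᵥ (fun i => exp (t i)) = ∑ i, ε i * exp (t i) := rfl
  rw [h2, h3, h4]
  have hr : √(2 * π) ^ Fintype.card V ≠ 0 := by positivity
  have hs : √d ≠ 0 := (sqrt_pos.2 hd0).ne'
  generalize √(2 * π) ^ Fintype.card V = r at *
  generalize exp (-(1 / 2) * (∑ i, ∑ j, Hm (Wmat G β) (hvec (Wmat G β) ε t) i j) -
    (1 / 2) * ∑ i, ε i * exp (t i)) = E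
  field_simp

end Ward

/-- ward identity, formula (B.3) of Disertori–Spencer–Zirnbauer:
for any vertex `y ∈ V` and any pinning `ε ≥ 0` with at least one `ε_i > 0`,
`E_{μ^ε}[e^{t_y}] = 1`. -/
theorem stmt_14 {V : Type*} [Fintype V] [DecidableEq V]
    (G : SimpleGraph V) (hG : G.Connected)
    (β : V → V → ℝ) (hβsymm : ∀ i j, β i j = β j i)
    (hβpos : ∀ i j, G.Adj i j → 0 < β i j)
    (ε : V → ℝ) (hε : ∀ i, 0 ≤ ε i) (hε' : ∃ i, 0 < ε i)
    (y : V) :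
    expect G β ε (fun t _ _ => Real.exp (t y)) = 1 := by
  have hW := Wmat_isSymm (G := G) hβsymm
  have hnn : ∀ T ∈ STrees (aug G), ∀ p : (V → ℝ) × (V → ℝ),
      0 ≤ dens G β ε p.1 p.2 T * exp (p.1 y) := fun T hT p =>
    mul_nonneg (dens_nonneg hβsymm hβpos hε _ _ hT) (exp_pos _).le
  have hcont : ∀ T, Continuous fun p : (V → ℝ) × (V → ℝ) =>
      dens G β ε p.1 p.2 T * exp (p.1 y) := fun T => by
    have := continuous_dens G β ε T
    fun_prop
  have hone : ∑ T ∈ STrees (aug G), ∫⁻ p : (V → ℝ) × (V → ℝ),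
      ENNReal.ofReal (dens G β ε p.1 p.2 T * exp (p.1 y)) = 1 := by
    rw [← lintegral_finsetSum' _ fun T _ => (hcont T).measurable.ennreal_ofReal.aemeasurable]
    have h1 : ∀ p : (V → ℝ) × (V → ℝ), ∑ T ∈ STrees (aug G),
        ENNReal.ofReal (dens G β ε p.1 p.2 T * exp (p.1 y)) =
        ENNReal.ofReal (∑ T ∈ STrees (aug G), dens G β ε p.1 p.2 T * exp (p.1 y)) := fun p =>
      (ENNReal.ofReal_sum_of_nonneg fun T hT => hnn T hT p).symm
    simp only [h1]
    have hm : Measurable fun p : (V → ℝ) × (V → ℝ) =>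
        ENNReal.ofReal (∑ T ∈ STrees (aug G), dens G β ε p.1 p.2 T * exp (p.1 y)) :=
      (continuous_finsetSum _ fun T _ => hcont T).measurable.ennreal_ofReal
    rw [Measure.volume_eq_prod, lintegral_prod _ hm.aemeasurable]
    simp only [lintegral_s hG hβsymm hβpos hε hε']
    rw [lintegral_const_mul' _ _ ENNReal.ofReal_ne_top,
      lintegral_hvec hG hβsymm hβpos hε hε' (g := fun h => ENNReal.ofReal (Psi (Wmat G β) ε y h))
        (fun h hh => by simp only [Psi, Phi_of_not hh, zero_mul, ENNReal.ofReal_zero]),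
      lintegral_Psi hW (Wmat_nonneg hβpos) hε y
        (fun h hh => inv_mulVec_pos hG hβpos hε hε' hh y),
      ← ENNReal.ofReal_mul (by positivity), ← ENNReal.ofReal_one]
    congr 1
    have h2 : √(2 * π) ^ Fintype.card V ≠ 0 := by positivity
    rw [mul_mul_mul_comm, inv_mul_cancel₀ h2, ← exp_add]
    simp
  have hfin : ∀ T ∈ STrees (aug G), ∫⁻ p : (V → ℝ) × (V → ℝ),
      ENNReal.ofReal (dens G β ε p.1 p.2 T * exp (p.1 y)) ≠ ⊤ := by
    intro T hT htop
    have := Finset.single_le_sum (f := fun T => ∫⁻ p : (V → ℝ) × (V → ℝ),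
      ENNReal.ofReal (dens G β ε p.1 p.2 T * exp (p.1 y))) (fun _ _ => zero_le) hT
    rw [hone] at this
    simp [htop] at this
  have hint : ∀ T ∈ STrees (aug G), ∫ p : (V → ℝ) × (V → ℝ), dens G β ε p.1 p.2 T * exp (p.1 y) =
      (∫⁻ p : (V → ℝ) × (V → ℝ),
        ENNReal.ofReal (dens G β ε p.1 p.2 T * exp (p.1 y))).toReal := fun T hT =>
    integral_eq_lintegral_of_nonneg_ae (ae_of_all _ (hnn T hT)) (hcont T).aestronglyMeasurable
  rw [expect, Finset.sum_congr rfl hint, ← ENNReal.toReal_sum hfin, hone, ENNReal.toReal_one]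

end H22
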